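/- arXiv:2405.02729 — 2 statements merged into one kernel-verified Lean document; each statement's English description precedes it below -/
import Mathlib

section
/- In the setting of Ulam's method for the approximating maps τ_n, let n ≥ N and k ≥ 1, and let f_{n,k} be a normalized fixed point of the Ulam operator P^{(k)}_{τ_n} (so f_{n,k} is constant on each J_i, f_{n,k} ≥ 0, ∫₀¹ f_{n,k} dλ = 1 and Q^{(k)}(P_{τ_n} f_{n,k}) = f_{n,k} λ-a.e.). Then f_{n,k} is λ-a.e. equal to a non-increasing function on [0,1]. -/
open MeasureTheory Set Filter

/-- Lebesgue measure on the unit interval `I = [0,1]`. -/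
noncomputable def lam : MeasureTheory.Measure ℝ := MeasureTheory.volume.restrict (Set.Icc 0 1)

/-- A piecewise convex map `τ` on `[0,1]` with countably many branches, whose partition
points form a strictly decreasing sequence `1 = a 0 > a 1 > ⋯` tending to `0`; on each
`[a (m+1), a m)` the map is continuous, convex and differentiable, vanishes at the left
endpoint, and has right derivative `d (m+1) = τ'(a (m+1)) > 0` there; there is `N ≥ 1`
with `D₁ = ∑_{m=N+1}^∞ 1/τ'(a m) < 1` and `C = ∑_{m=1}^∞ 1/τ'(a m) < ∞`. -/
structure PCApprox (τ : ℝ → ℝ) (a d : ℕ → ℝ) (N : ℕ) : Prop where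
  mapsTo : Set.MapsTo τ (Set.Icc 0 1) (Set.Icc 0 1)
  a_zero : a 0 = 1
  a_anti : StrictAnti a
  a_lim : Filter.Tendsto a Filter.atTop (nhds 0)
  cont : ∀ m : ℕ, ContinuousOn τ (Set.Ico (a (m+1)) (a m))
  conv : ∀ m : ℕ, ConvexOn ℝ (Set.Ico (a (m+1)) (a m)) τ
  diff : ∀ m : ℕ, ∀ x ∈ Set.Ico (a (m+1)) (a m),
    DifferentiableWithinAt ℝ τ (Set.Ico (a (m+1)) (a m)) x
  map_a : ∀ m : ℕ, τ (a (m+1)) = 0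
  deriv_a : ∀ m : ℕ, HasDerivWithinAt τ (d (m+1)) (Set.Ici (a (m+1))) (a (m+1))
  d_pos : ∀ m : ℕ, 0 < d (m+1)
  N_pos : 1 ≤ N
  sum_d : Summable fun m => 1 / d (m+1)
  D₁_lt : (∑' m : ℕ, 1 / d (m + N + 1)) < 1

/-- `D₁ = ∑_{m=N+1}^∞ 1/τ'(a m)`. -/
noncomputable def D₁ (d : ℕ → ℝ) (N : ℕ) : ℝ := ∑' m : ℕ, 1 / d (m + N + 1)

/-- `C = ∑_{m=1}^∞ 1/τ'(a m)`. -/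
noncomputable def Cconst (d : ℕ → ℝ) : ℝ := ∑' m : ℕ, 1 / d (m + 1)

/-- `D = ∑_{m=1}^N 1/(a m · τ'(a m))`. -/
noncomputable def Dconst (a d : ℕ → ℝ) (N : ℕ) : ℝ :=
  ∑ m ∈ Finset.range N, 1 / (a (m+1) * d (m+1))

/-- The approximating map `τ_n`: `τ_n x = x / a n` for `x < a n`, and `τ_n x = τ x`
for `a n ≤ x`. -/
noncomputable def tauN (τ : ℝ → ℝ) (a : ℕ → ℝ) (n : ℕ) : ℝ → ℝ :=
  fun x => if x < a n then x / a n else τ x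

/-- Essential supremum (with respect to `λ` on `[0,1]`) of a real function, valued in `ℝ≥0∞`. -/
noncomputable def esssup (f : ℝ → ℝ) : ENNReal := essSup (fun x => ENNReal.ofReal (f x)) lam

/-- The `i`-th Ulam interval `J_{i+1} = [i/k, (i+1)/k)` of the uniform partition of `[0,1]`
into `k` subintervals. -/
noncomputable def Jint (k i : ℕ) : Set ℝ := Set.Ico ((i : ℝ) / k) (((i : ℝ) + 1) / k)

/-- The Ulam projection `Q^{(k)} f = ∑_{i=1}^k (k ∫_{J_i} f dλ) · χ_{J_i}` onto functions
constant on the elements of the uniform partition into `k` subintervals. -/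
noncomputable def Qk (k : ℕ) (f : ℝ → ℝ) : ℝ → ℝ := fun x =>
  ∑ i ∈ Finset.range k,
    Set.indicator (Jint k i) (fun _ => (k : ℝ) * ∫ y in Jint k i, f y ∂lam) x

/-- `fnk` is a normalized fixed point of the Ulam operator `P^{(k)}_σ = Q^{(k)} ∘ P_σ`:
it is constant on each `J_i`, non-negative, of integral `1`, and `Q^{(k)} (P_σ fnk) = fnk`
`λ`-a.e. (where the Frobenius–Perron image `P_σ fnk` is realized by a version `g`). -/
def IsUlamFixed (σ : ℝ → ℝ) (k : ℕ) (fnk : ℝ → ℝ) : Prop :=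
  MeasureTheory.Integrable fnk lam ∧
  (∀ i : ℕ, i < k → ∀ x ∈ Jint k i, ∀ y ∈ Jint k i, fnk x = fnk y) ∧
  (∀ x ∈ Set.Icc (0:ℝ) 1, 0 ≤ fnk x) ∧
  (∫ x, fnk x ∂lam) = 1 ∧
  ∃ g : ℝ → ℝ, MeasureTheory.Integrable g lam ∧
    (∀ A : Set ℝ, MeasurableSet A → A ⊆ Set.Icc (0:ℝ) 1 →
      ∫ x in A, g x ∂lam = ∫ x in σ ⁻¹' A, fnk x ∂lam) ∧
    Qk k g =ᵐ[lam] fnk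

theorem aux_parts (G : ℕ → ℝ) (K : ℕ) :
    ∑ j ∈ Finset.range K, ((j:ℝ)+1) * (G j - G (j+1))
      = ∑ j ∈ Finset.range K, G j - K * G K := by
  induction K with
  | zero => simp
  | succ K ih => rw [Finset.sum_range_succ, ih, Finset.sum_range_succ]; push_cast; ring

theorem aux_zero (k : ℕ) (G : ℕ → ℕ → ℝ) (p : ℕ → ℝ)
    (hanti : ∀ i < k, ∀ j < k, G i (j+1) ≤ G i j)
    (hGk : ∀ i, G i k = 0)
    (hsum : ∀ i < k, ∑ j ∈ Finset.range k, G i j ≤ (i:ℝ)+1)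
    (hpos : ∀ i, i+1 < k → 0 < G i (i+1))
    (hp : ∀ i < k, 0 ≤ p i)
    (hsub : ∀ j < k, p j ≤ ∑ i ∈ Finset.range k, p i * (G i j - G i (j+1)))
    (hlast : ∀ i, i + 1 = k → p i = 0) : ∀ i < k, p i = 0 := by
  have hle : ∀ j ∈ Finset.range k, ((j:ℝ)+1) * p j ≤
      ((j:ℝ)+1) * ∑ i ∈ Finset.range k, p i * (G i j - G i (j+1)) := by
    intro j hj
    exact mul_le_mul_of_nonneg_left (hsub j (Finset.mem_range.1 hj)) (by positivity)
  have htot : ∑ j ∈ Finset.range k, ((j:ℝ)+1) * ∑ i ∈ Finset.range k, p i * (G i j - G i (j+1))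
      ≤ ∑ j ∈ Finset.range k, ((j:ℝ)+1) * p j := by
    simp_rw [Finset.mul_sum]
    rw [Finset.sum_comm]
    apply Finset.sum_le_sum
    intro i hi
    have hi' := Finset.mem_range.1 hi
    have h1 : ∑ j ∈ Finset.range k, ((j:ℝ)+1) * (p i * (G i j - G i (j+1)))
        = p i * ∑ j ∈ Finset.range k, ((j:ℝ)+1) * (G i j - G i (j+1)) := by
      rw [Finset.mul_sum]; apply Finset.sum_congr rfl; intros; ring
    rw [h1, aux_parts, hGk, mul_comm ((i:ℝ)+1)]
    apply mul_le_mul_of_nonneg_left _ (hp i hi')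
    simpa using hsum i hi'
  have heq := (Finset.sum_eq_sum_iff_of_le hle).1 (le_antisymm (Finset.sum_le_sum hle) htot)
  have heq' : ∀ j < k, p j = ∑ i ∈ Finset.range k, p i * (G i j - G i (j+1)) := by
    intro j hj
    have := heq j (Finset.mem_range.2 hj)
    exact mul_left_cancel₀ (by positivity) this
  have main : ∀ r i, i + 1 + r = k → p i = 0 := by
    intro r
    induction r using Nat.strong_induction_on with
    | _ r ih =>
      intro i hir
      rcases Nat.eq_zero_or_pos r with h0 | h0
      · exact hlast i (by omega)
      have hz : ∀ j ∈ Finset.Ico (i+1) k, p i * (G i j - G i (j+1)) = 0 := by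
        intro j hj
        have hj' := Finset.mem_Ico.1 hj
        have hpj : p j = 0 := ih (k - (j+1)) (by omega) j (by omega)
        have h2 := heq' j hj'.2
        rw [hpj] at h2
        have hnn : ∀ i ∈ Finset.range k, 0 ≤ p i * (G i j - G i (j+1)) := by
          intro i hi
          exact mul_nonneg (hp i (Finset.mem_range.1 hi))
            (sub_nonneg.2 (hanti i (Finset.mem_range.1 hi) j hj'.2))
        exact (Finset.sum_eq_zero_iff_of_nonneg hnn).1 h2.symm i (Finset.mem_range.2 (by omega))
      have hs := Finset.sum_eq_zero hz
      rw [← Finset.mul_sum] at hs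
      have ht : ∑ j ∈ Finset.Ico (i+1) k, (G i j - G i (j+1)) = G i (i+1) := by
        have := Finset.sum_Ico_sub (G i) (show i+1 ≤ k by omega)
        rw [hGk] at this
        rw [← neg_inj, ← Finset.sum_neg_distrib]
        simpa using this
      rw [ht] at hs
      exact (mul_eq_zero.1 hs).resolve_right (hpos i (by omega)).ne'
  intro i hi
  exact main (k - (i+1)) i (by omega)

theorem aux_core (k : ℕ) (hk : 1 ≤ k) (G : ℕ → ℕ → ℝ) (b : ℕ → ℝ)
    (hanti : ∀ i < k, ∀ j < k, G i (j+1) ≤ G i j)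
    (hGk : ∀ i, G i k = 0)
    (hsum : ∀ i < k, ∑ j ∈ Finset.range k, G i j ≤ (i:ℝ)+1)
    (hpos : ∀ i, i+1 < k → 0 < G i (i+1))
    (hfix : ∀ j < k, b j = ∑ i ∈ Finset.range k, b i * (G i j - G i (j+1)))
    (hb : 0 < ∑ i ∈ Finset.range k, b i * ((i:ℝ)+1)) : ∀ i < k, 0 ≤ b i := by
  have hH : ∀ i ∈ Finset.range k, ∀ j < k, 0 ≤ G i j - G i (j+1) := fun i hi j hj =>
    sub_nonneg.2 (hanti i (Finset.mem_range.1 hi) j hj)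
  have hP : b (k-1) ≤ 0 → ∀ i < k, max (b i) 0 = 0 := by
    intro h0
    apply aux_zero k G _ hanti hGk hsum hpos (fun i _ => le_max_right _ _)
    · intro j hj
      apply max_le
      · rw [hfix j hj]
        exact Finset.sum_le_sum fun i hi =>
          mul_le_mul_of_nonneg_right (le_max_left _ _) (hH i hi j hj)
      · exact Finset.sum_nonneg fun i hi => mul_nonneg (le_max_right _ _) (hH i hi j hj)
    · intro i hi
      have : i = k-1 := by omega
      rw [this]; exact max_eq_right h0
  have hN : 0 ≤ b (k-1) → ∀ i < k, max (-b i) 0 = 0 := by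
    intro h0
    apply aux_zero k G _ hanti hGk hsum hpos (fun i _ => le_max_right _ _)
    · intro j hj
      apply max_le
      · rw [hfix j hj, ← Finset.sum_neg_distrib]
        refine Finset.sum_le_sum fun i hi => ?_
        rw [← neg_mul]
        exact mul_le_mul_of_nonneg_right (le_max_left _ _) (hH i hi j hj)
      · exact Finset.sum_nonneg fun i hi => mul_nonneg (le_max_right _ _) (hH i hi j hj)
    · intro i hi
      have : i = k-1 := by omega
      rw [this]; exact max_eq_right (by linarith)
  rcases le_total (b (k-1)) 0 with h | h
  · exfalso
    have h1 := hP h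
    have : ∑ i ∈ Finset.range k, b i * ((i:ℝ)+1) ≤ 0 := by
      apply Finset.sum_nonpos
      intro i hi
      have h2 := h1 i (Finset.mem_range.1 hi)
      have h3 := le_max_left (b i) 0
      rw [h2] at h3
      exact mul_nonpos_of_nonpos_of_nonneg h3 (by positivity)
    linarith
  · intro i hi
    have h2 := hN h i hi
    have h3 := le_max_left (-b i) 0
    rw [h2] at h3
    linarith

/-- chord inequality -/
theorem aux_chord {φ : ℝ → ℝ} {p e : ℝ} (hconv : ConvexOn ℝ (Ico p e) φ) (h0 : φ p = 0)
    {x y : ℝ} (hpx : p ≤ x) (hxy : x ≤ y) (hy : y < e) : φ x * (y - p) ≤ (x - p) * φ y := by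
  rcases eq_or_lt_of_le (hpx.trans hxy) with h | h
  · have : x = p := by linarith
    subst this; simp [h0, ← h]
  have hd : 0 < y - p := by linarith
  have hw1 : 0 ≤ (y-x)/(y-p) := by apply div_nonneg <;> linarith
  have hw2 : 0 ≤ (x-p)/(y-p) := by apply div_nonneg <;> linarith
  have hw3 : (y-x)/(y-p) + (x-p)/(y-p) = 1 := by field_simp; ring
  have hp' : p ∈ Ico p e := ⟨le_refl _, by linarith⟩
  have hy' : y ∈ Ico p e := ⟨h.le, hy⟩
  have := hconv.2 hp' hy' hw1 hw2 hw3
  have e1 : ((y-x)/(y-p)) • p + ((x-p)/(y-p)) • y = x := by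
    simp only [smul_eq_mul]; field_simp; ring
  rw [e1, h0] at this
  simp only [smul_eq_mul, mul_zero, zero_add] at this
  rw [div_mul_eq_mul_div, le_div_iff₀ hd] at this
  exact this

theorem aux_mono {φ : ℝ → ℝ} {p e : ℝ} (hconv : ConvexOn ℝ (Ico p e) φ) (h0 : φ p = 0)
    (hnn : ∀ x ∈ Ico p e, 0 ≤ φ x) : MonotoneOn φ (Ico p e) := by
  intro x hx y hy hxy
  have h := aux_chord hconv h0 hx.1 hxy hy.2
  rcases eq_or_lt_of_le (hx.1.trans hxy) with h' | h'
  · have : x = y := by linarith [hx.1]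
    rw [this]
  · have := hnn y hy
    by_contra hc
    push Not at hc
    nlinarith [hx.1]

theorem aux_meas {φ : ℝ → ℝ} {p e u v : ℝ} (hconv : ConvexOn ℝ (Ico p e) φ) (h0 : φ p = 0)
    (hnn : ∀ x ∈ Ico p e, 0 ≤ φ x) : MeasurableSet (Ico p e ∩ φ ⁻¹' Ico u v) := by
  have hm := aux_mono hconv h0 hnn
  apply Set.OrdConnected.measurableSet
  constructor
  rintro x ⟨hx, hx'⟩ y ⟨hy, hy'⟩ z hz
  have hz' : z ∈ Ico p e := ⟨hx.1.trans hz.1, hz.2.trans_lt hy.2⟩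
  exact ⟨hz', hx'.1.trans (hm hx hz' hz.1), (hm hz' hy hz.2).trans_lt hy'.2⟩

theorem aux_branch {φ : ℝ → ℝ} {p e u h : ℝ} (hu : 0 ≤ u) (hh : 0 < h)
    (hconv : ConvexOn ℝ (Ico p e) φ) (hcont : ContinuousOn φ (Ico p e)) (h0 : φ p = 0)
    (hnn : ∀ x ∈ Ico p e, 0 ≤ φ x) :
    volume (Ico p e ∩ φ ⁻¹' Ico (u+h) (u+h+h)) ≤ volume (Ico p e ∩ φ ⁻¹' Ico u (u+h)) := by
  have hm := aux_mono hconv h0 hnn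
  rcases (Ico p e ∩ φ ⁻¹' Ico (u+h) (u+h+h)).eq_empty_or_nonempty with hB | ⟨x0, hx0, hx0'⟩
  · simp [hB]
  obtain ⟨β, hβ, hβv⟩ : ∃ β ∈ Icc p x0, φ β = u + h := by
    have := intermediate_value_Icc hx0.1
      (hcont.mono (fun z hz => ⟨hz.1, hz.2.trans_lt hx0.2⟩))
    apply this
    rw [h0]
    exact ⟨by linarith, hx0'.1⟩
  have hβe : β < e := hβ.2.trans_lt hx0.2
  have hpβ : p < β := by
    rcases eq_or_lt_of_le hβ.1 with h1 | h1
    · rw [← h1, h0] at hβv; linarith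
    · exact h1
  have hsub : (Ico p e ∩ φ ⁻¹' Ico (u+h) (u+h+h)) ⊆
      (fun x => 2 * β - x) ⁻¹' ((Ico p e ∩ φ ⁻¹' Ico u (u+h)) ∪ {β}) := by
    rintro x ⟨hx, hx'⟩
    have hx1 : u + h ≤ φ x := hx'.1
    have hx2 : φ x < u + h + h := hx'.2
    have hβx : β ≤ x := by
      by_contra hc
      push Not at hc
      have := aux_chord hconv h0 hx.1 hc.le hβe
      rw [hβv] at this
      nlinarith
    rcases eq_or_lt_of_le hβx with h1 | h1
    · right
      simp only [mem_singleton_iff]; linarith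
    left
    have hc := aux_chord hconv h0 hpβ.le hβx hx.2
    rw [hβv] at hc
    have hyp : p ≤ 2 * β - x := by
      by_contra hcon
      push Not at hcon
      nlinarith
    have hy : 2 * β - x ∈ Ico p e := ⟨hyp, by linarith⟩
    have hmid := hconv.2 hy hx (show (0:ℝ) ≤ 1/2 by norm_num) (show (0:ℝ) ≤ 1/2 by norm_num)
      (by norm_num)
    have e1 : (1/2 : ℝ) • (2 * β - x) + (1/2 : ℝ) • x = β := by
      simp only [smul_eq_mul]; ring
    rw [e1, hβv] at hmid
    simp only [smul_eq_mul] at hmid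
    refine ⟨hy, by simp only; linarith, ?_⟩
    have hc2 := aux_chord hconv h0 hyp (show 2 * β - x ≤ β by linarith) hβe
    rw [hβv] at hc2
    show φ (2 * β - x) < u + h
    by_contra hcon
    push Not at hcon
    nlinarith
  calc _ ≤ _ := measure_mono hsub
    _ = volume ((Ico p e ∩ φ ⁻¹' Ico u (u+h)) ∪ {β}) := (Measure.measurePreserving_sub_left volume (2 * β)).measure_preimage_emb
        (Homeomorph.subLeft (2 * β)).measurableEmbedding _
    _ ≤ _ + volume {β} := measure_union_le _ _
    _ = _ := by simp

theorem aux_congr {φ ψ : ℝ → ℝ} {S T : Set ℝ} (h : ∀ x ∈ S, φ x = ψ x) :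
    S ∩ φ ⁻¹' T = S ∩ ψ ⁻¹' T := by
  ext x
  simp only [mem_inter_iff, mem_preimage]
  constructor
  · rintro ⟨a, b⟩; exact ⟨a, by rwa [← h x a]⟩
  · rintro ⟨a, b⟩; exact ⟨a, by rwa [h x a]⟩

/-- Good pieces: both the measure comparison and measurability. -/
def Good (σ : ℝ → ℝ) (p e : ℝ) : Prop :=
  (∀ u v : ℝ, MeasurableSet (Ico p e ∩ σ ⁻¹' Ico u v)) ∧
  ∀ u h : ℝ, 0 ≤ u → 0 < h →
    volume (Ico p e ∩ σ ⁻¹' Ico (u+h) (u+h+h)) ≤ volume (Ico p e ∩ σ ⁻¹' Ico u (u+h))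

theorem Good.of_convex {φ : ℝ → ℝ} {p e : ℝ}
    (hconv : ConvexOn ℝ (Ico p e) φ) (hcont : ContinuousOn φ (Ico p e)) (h0 : φ p = 0)
    (hnn : ∀ x ∈ Ico p e, 0 ≤ φ x) : Good φ p e :=
  ⟨fun _ _ => aux_meas hconv h0 hnn, fun _ _ hu hh => aux_branch hu hh hconv hcont h0 hnn⟩

theorem Good.congr {φ ψ : ℝ → ℝ} {p e : ℝ} (hg : Good φ p e)
    (h : ∀ x ∈ Ico p e, ψ x = φ x) : Good ψ p e := by
  constructor
  · intro u v; rw [aux_congr h]; exact hg.1 u v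
  · intro u w hu hw; rw [aux_congr h, aux_congr h]; exact hg.2 u w hu hw

theorem Good.glue {φ : ℝ → ℝ} {p q e : ℝ} (h1 : Good φ p q) (h2 : Good φ q e)
    (hpq : p ≤ q) (hqe : q ≤ e) : Good φ p e := by
  have hU : ∀ T : Set ℝ, Ico p e ∩ T = (Ico p q ∩ T) ∪ (Ico q e ∩ T) := by
    intro T; rw [← Set.union_inter_distrib_right, Ico_union_Ico_eq_Ico hpq hqe]
  have hD : ∀ T : Set ℝ, Disjoint (Ico p q ∩ T) (Ico q e ∩ T) := by
    intro T
    rw [Set.disjoint_left]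
    rintro x ⟨hx, _⟩ ⟨hy, _⟩
    exact absurd hx.2 (not_lt.2 hy.1)
  constructor
  · intro u v; rw [hU]; exact (h1.1 u v).union (h2.1 u v)
  · intro u w hu hw
    rw [hU, hU, measure_union (hD _) (h2.1 _ _), measure_union (hD _) (h2.1 _ _)]
    exact add_le_add (h1.2 u w hu hw) (h2.2 u w hu hw)

theorem a_pos {τ : ℝ → ℝ} {a d : ℕ → ℝ} {N : ℕ} (hτ : PCApprox τ a d N) (m : ℕ) : 0 < a m :=
  lt_of_le_of_lt (hτ.a_anti.antitone.le_of_tendsto hτ.a_lim (m+1)) (hτ.a_anti (Nat.lt_succ_self m))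

theorem good_tauN {τ : ℝ → ℝ} {a d : ℕ → ℝ} {N : ℕ} (hτ : PCApprox τ a d N) (n : ℕ)
    (s : ℝ) (hs : s ≤ 1) : Good (tauN τ a n) 0 s := by
  have hpos := a_pos hτ
  have ha1 : ∀ m, a m ≤ 1 := fun m => by
    rw [← hτ.a_zero]; exact hτ.a_anti.antitone (Nat.zero_le m)
  have key : ∀ r ≤ n, Good (tauN τ a n) 0 (min (a (n - r)) s) := by
    intro r
    induction r with
    | zero =>
      intro _
      have : Good (fun x => (a n)⁻¹ • x) 0 (min (a (n - 0)) s) := by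
        apply Good.of_convex
        · exact (convexOn_id (convex_Ico _ _)).smul (inv_nonneg.2 (hpos n).le)
        · fun_prop
        · simp
        · intro x hx
          exact mul_nonneg (inv_nonneg.2 (hpos n).le) hx.1
      apply this.congr
      intro x hx
      have : x < a n := lt_of_lt_of_le hx.2 (min_le_left _ _)
      simp [tauN, this, div_eq_inv_mul]
    | succ r ih =>
      intro hr
      obtain ⟨m, hm⟩ : ∃ m, n = m + 1 + r := ⟨n - (r+1), by omega⟩
      have e1 : n - r = m + 1 := by omega
      have e2 : n - (r+1) = m := by omega
      have ih' := ih (by omega)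
      rw [e1] at ih'
      rw [e2]
      have hlt : a (m+1) < a m := hτ.a_anti (Nat.lt_succ_self m)
      rcases le_total s (a (m+1)) with h | h
      · rw [min_eq_right h] at ih'
        rw [min_eq_right (h.trans hlt.le)]; exact ih'
      rw [min_eq_left h] at ih'
      refine ih'.glue ?_ (hpos _).le (le_min hlt.le h)
      have hsub : Ico (a (m+1)) (min (a m) s) ⊆ Ico (a (m+1)) (a m) :=
        Ico_subset_Ico_right (min_le_left _ _)
      have : Good τ (a (m+1)) (min (a m) s) := by
        apply Good.of_convex
        · exact (hτ.conv m).subset hsub (convex_Ico _ _)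
        · exact (hτ.cont m).mono hsub
        · exact hτ.map_a m
        · intro x hx
          have hx' := hsub hx
          exact (hτ.mapsTo ⟨(hpos _).le.trans hx'.1, hx'.2.le.trans (ha1 m)⟩).1
      apply this.congr
      intro x hx
      have : ¬ x < a n := not_lt.2 (le_trans (hτ.a_anti.antitone (by omega)) hx.1)
      simp [tauN, this]
  have := key n le_rfl
  rwa [Nat.sub_self, hτ.a_zero, min_eq_right hs] at this

theorem aux_floor {k : ℕ} (hk : 1 ≤ k) {x : ℝ} (hx0 : 0 ≤ x) (i : ℕ) :
    x < ((i:ℝ)+1)/k ↔ ⌊(k:ℝ) * x⌋₊ ≤ i := by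
  have hk' : (0:ℝ) < k := by exact_mod_cast hk
  rw [lt_div_iff₀ hk', ← Nat.lt_succ_iff, Nat.floor_lt (by positivity), mul_comm]
  push_cast
  rfl

theorem aux_memJ {k : ℕ} (hk : 1 ≤ k) {x : ℝ} (hx0 : 0 ≤ x) :
    x ∈ Jint k ⌊(k:ℝ) * x⌋₊ := by
  have hk' : (0:ℝ) < k := by exact_mod_cast hk
  refine ⟨?_, (aux_floor hk hx0 _).2 le_rfl⟩
  rw [div_le_iff₀ hk', mul_comm]
  exact Nat.floor_le (by positivity)

theorem aux_Jdisj {k : ℕ} (hk : 1 ≤ k) {x : ℝ} {i j : ℕ} (hi : x ∈ Jint k i) (hj : x ∈ Jint k j) :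
    i = j := by
  have hk' : (0:ℝ) < k := by exact_mod_cast hk
  have h1 := hi.1.trans_lt hj.2
  have h2 := hj.1.trans_lt hi.2
  rw [div_lt_div_iff_of_pos_right hk'] at h1 h2
  have h1' : i < j + 1 := by exact_mod_cast h1
  have h2' : j < i + 1 := by exact_mod_cast h2
  omega

theorem aux_repr {k : ℕ} (hk : 1 ≤ k) {f : ℝ → ℝ} {c : ℕ → ℝ} (hck : c k = 0)
    (hc : ∀ j < k, ∀ x ∈ Jint k j, f x = c j) {x : ℝ} (hx0 : 0 ≤ x) (hx1 : x < 1) :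
    f x = ∑ i ∈ Finset.range k,
      (Ico (0:ℝ) (((i:ℝ)+1)/k)).indicator (fun _ => c i - c (i+1)) x := by
  have hk' : (0:ℝ) < k := by exact_mod_cast hk
  have hJ : ⌊(k:ℝ) * x⌋₊ < k := by
    rw [Nat.floor_lt (by positivity)]; nlinarith
  have h1 : ∀ i ∈ Finset.range k, (Ico (0:ℝ) (((i:ℝ)+1)/k)).indicator (fun _ => c i - c (i+1)) x
      = if ⌊(k:ℝ) * x⌋₊ ≤ i then c i - c (i+1) else 0 := by
    intro i _
    simp only [indicator, mem_Ico, hx0, true_and, aux_floor hk hx0]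
  rw [Finset.sum_congr rfl h1, ← Finset.sum_filter, hc _ hJ x (aux_memJ hk hx0)]
  have h2 : (Finset.range k).filter (fun i => ⌊(k:ℝ) * x⌋₊ ≤ i) = Finset.Ico ⌊(k:ℝ) * x⌋₊ k := by
    ext i; simp; tauto
  rw [h2]
  have := Finset.sum_Ico_sub c hJ.le
  rw [hck] at this
  rw [← neg_inj, ← Finset.sum_neg_distrib]
  simpa using this.symm

theorem aux_int {k : ℕ} (hk : 1 ≤ k) {f : ℝ → ℝ} {c : ℕ → ℝ} (hck : c k = 0)
    (hc : ∀ j < k, ∀ x ∈ Jint k j, f x = c j) (T : Set ℝ) :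
    ∫ x in T, f x ∂lam = ∑ i ∈ Finset.range k,
      (c i - c (i+1)) * volume.real (Ico (0:ℝ) (((i:ℝ)+1)/k) ∩ T) := by
  have hk' : (0:ℝ) < k := by exact_mod_cast hk
  have hae : ∀ᵐ x ∂lam, f x = ∑ i ∈ Finset.range k,
      (Ico (0:ℝ) (((i:ℝ)+1)/k)).indicator (fun _ => c i - c (i+1)) x := by
    unfold lam
    rw [ae_restrict_iff' measurableSet_Icc]
    have : ∀ᵐ x : ℝ, x ≠ 1 := by simp [ae_iff]
    filter_upwards [this] with x hx hx'
    exact aux_repr hk hck hc hx'.1 (lt_of_le_of_ne hx'.2 hx)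
  have : IsFiniteMeasure lam := by unfold lam; infer_instance
  rw [integral_congr_ae (ae_restrict_of_ae hae), integral_finsetSum]
  · apply Finset.sum_congr rfl
    intro i hi
    rw [integral_indicator measurableSet_Ico, integral_const, smul_eq_mul, mul_comm]
    congr 1
    simp only [Measure.real, Measure.restrict_apply MeasurableSet.univ, univ_inter,
      Measure.restrict_apply measurableSet_Ico]
    congr 1
    unfold lam
    rw [Measure.restrict_apply' measurableSet_Icc]
    congr 1
    apply inter_eq_left.2
    rintro x ⟨hx, _⟩
    refine ⟨hx.1, hx.2.le.trans ?_⟩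
    rw [div_le_one hk']
    exact_mod_cast Finset.mem_range.1 hi
  · intro i _
    exact (integrable_const _).indicator measurableSet_Ico

/-- Every normalized fixed point `f_{n,k}` of the Ulam operator `P^{(k)}_{τ_n}` is `λ`-a.e.
equal to a non-increasing function on `[0,1]`. -/
theorem stmt13 (τ : ℝ → ℝ) (a d : ℕ → ℝ) (N : ℕ)
    (hτ : PCApprox τ a d N) (n k : ℕ) (hn : N ≤ n) (hk : 1 ≤ k)
    (fnk : ℝ → ℝ) (hfix : IsUlamFixed (tauN τ a n) k fnk) :
    ∃ f₀ : ℝ → ℝ, AntitoneOn f₀ (Set.Icc 0 1) ∧ fnk =ᵐ[lam] f₀ := by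
  obtain ⟨-, hconst, -, hone, g, -, hg, hQ⟩ := hfix
  have hk' : (0:ℝ) < k := by exact_mod_cast hk
  set σ := tauN τ a n with hσ
  let c : ℕ → ℝ := fun j => if j < k then fnk ((j:ℝ)/k) else 0
  have hck : ∀ j, k ≤ j → c j = 0 := fun j hj => by simp [c, not_lt.2 hj]
  have hJne : ∀ j : ℕ, (j:ℝ)/k < ((j:ℝ)+1)/k := fun j => by
    rw [div_lt_div_iff_of_pos_right hk']; linarith
  have hc : ∀ j < k, ∀ x ∈ Jint k j, fnk x = c j := by
    intro j hj x hx
    simp only [c, hj, if_true]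
    exact hconst j hj x hx _ ⟨le_rfl, hJne j⟩
  have hle1 : ∀ j < k, ((j:ℝ)+1)/k ≤ 1 := fun j hj => by
    rw [div_le_one hk']; exact_mod_cast hj
  have hJsub : ∀ j < k, Jint k j ⊆ Icc (0:ℝ) 1 := fun j hj x hx =>
    ⟨le_trans (by positivity) hx.1, hx.2.le.trans (hle1 j hj)⟩
  -- fixed point equation
  have hfixc : ∀ j < k, c j = k * ∫ x in σ ⁻¹' Jint k j, fnk x ∂lam := by
    intro j hj
    rw [← hg (Jint k j) measurableSet_Ico (hJsub j hj)]
    have hne : lam (Jint k j) ≠ 0 := by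
      unfold lam
      rw [Measure.restrict_apply' measurableSet_Icc, inter_eq_left.2 (hJsub j hj), Jint,
        Real.volume_Ico]
      have := hJne j
      simp only [ne_eq, ENNReal.ofReal_eq_zero, not_le]; linarith
    obtain ⟨x, hxJ, hx⟩ : ∃ x ∈ Jint k j, Qk k g x = fnk x := by
      by_contra hcon
      push Not at hcon
      apply hne
      exact measure_mono_null (fun x hx => hcon x hx) (ae_iff.1 hQ)
    rw [← hc j hj x hxJ, ← hx, Qk, Finset.sum_eq_single j]
    · rw [indicator_of_mem hxJ]
    · intro i _ hij
      exact indicator_of_notMem (fun h => hij (aux_Jdisj hk h hxJ)) _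
    · intro h; exact absurd (Finset.mem_range.2 hj) h
  let G : ℕ → ℕ → ℝ := fun i j =>
    if j < k then k * volume.real (Ico (0:ℝ) (((i:ℝ)+1)/k) ∩ σ ⁻¹' Jint k j) else 0
  have hfin : ∀ (i : ℕ) (T : Set ℝ), volume (Ico (0:ℝ) (((i:ℝ)+1)/k) ∩ T) ≠ ⊤ := fun i T =>
    ne_top_of_le_ne_top (by simp [Real.volume_Ico]) (measure_mono inter_subset_left)
  have hGood : ∀ i < k, Good σ 0 (((i:ℝ)+1)/k) := fun i hi =>
    good_tauN hτ n _ (hle1 i hi)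
  have hcG : ∀ j ≤ k, c j = ∑ i ∈ Finset.range k, (c i - c (i+1)) * G i j := by
    intro j hj
    rcases eq_or_lt_of_le hj with h | h
    · simp [G, h, hck k le_rfl]
    · conv_lhs => rw [hfixc j h, aux_int hk (hck k le_rfl) hc, Finset.mul_sum]
      apply Finset.sum_congr rfl
      intro i _
      simp only [G, h, if_true]; ring
  have hb : ∀ i < k, 0 ≤ c i - c (i+1) := by
    apply aux_core k hk G (fun i => c i - c (i+1))
    · intro i hi j hj
      simp only [G, hj, if_true]
      split_ifs with h
      · apply mul_le_mul_of_nonneg_left _ hk'.le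
        apply ENNReal.toReal_mono (hfin _ _)
        have := (hGood i hi).2 ((j:ℝ)/k) (1/k) (by positivity) (by positivity)
        have e1 : (j:ℝ)/k + 1/k = ((j:ℝ)+1)/k := by ring
        have e2 : ((j:ℝ)+1)/k + 1/k = ((j:ℝ)+1+1)/k := by ring
        rw [e1, e2] at this
        simpa [Jint] using this
      · positivity
    · intro i; simp [G]
    · intro i hi
      have h1 : ∑ j ∈ Finset.range k, G i j = k * ∑ j ∈ Finset.range k,
          volume.real (Ico (0:ℝ) (((i:ℝ)+1)/k) ∩ σ ⁻¹' Jint k j) := by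
        rw [Finset.mul_sum]
        apply Finset.sum_congr rfl
        intro j hj
        simp [G, Finset.mem_range.1 hj]
      rw [h1, ← measureReal_biUnion_finset (h := fun j _ => hfin i _)]
      · have h2 : volume.real (⋃ j ∈ Finset.range k,
            (Ico (0:ℝ) (((i:ℝ)+1)/k) ∩ σ ⁻¹' Jint k j)) ≤ ((i:ℝ)+1)/k := by
          have : volume.real (Ico (0:ℝ) (((i:ℝ)+1)/k)) = ((i:ℝ)+1)/k := by
            rw [Real.volume_real_Ico_of_le (by positivity)]; ring
          refine le_trans ?_ this.le
          apply measureReal_mono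
          · exact iUnion₂_subset fun _ _ => inter_subset_left
          · simp [Real.volume_Ico]
        calc _ ≤ (k:ℝ) * (((i:ℝ)+1)/k) := mul_le_mul_of_nonneg_left h2 hk'.le
          _ = _ := by field_simp
      · intro j _ j' _ hjj
        simp only [Function.onFun]
        rw [Set.disjoint_left]
        rintro x ⟨_, hx⟩ ⟨_, hx'⟩
        exact hjj (aux_Jdisj hk hx hx')
      · intro j _
        exact (hGood i hi).1 _ _
    · intro i hi
      simp only [G, hi, if_true]
      apply mul_pos hk'
      have han := a_pos hτ n
      have han1 : a n < 1 := by
        rw [← hτ.a_zero]; exact hτ.a_anti (by have := hτ.N_pos; omega)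
      have hp : (0:ℝ) < ((i:ℝ)+1)/k := by positivity
      have hi2 : ((i:ℝ)+1+1)/k ≤ 1 := by rw [div_le_one hk']; exact_mod_cast hi
      have hlt : ((i:ℝ)+1)/k < ((i:ℝ)+1+1)/k := by
        rw [div_lt_div_iff_of_pos_right hk']; linarith
      apply ENNReal.toReal_pos _ (hfin _ _)
      apply ne_of_gt
      have hsub : Ico (a n * (((i:ℝ)+1)/k)) (min (((i:ℝ)+1)/k) (a n * (((i:ℝ)+1+1)/k))) ⊆
          Ico (0:ℝ) (((i:ℝ)+1)/k) ∩ σ ⁻¹' Jint k (i+1) := by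
        rintro x ⟨hx1, hx2⟩
        have hx3 := lt_of_lt_of_le hx2 (min_le_left _ _)
        have hx4 := lt_of_lt_of_le hx2 (min_le_right _ _)
        have hx5 : x < a n := by nlinarith
        refine ⟨⟨le_trans (by positivity) hx1, hx3⟩, ?_⟩
        simp only [mem_preimage, hσ, tauN, hx5, if_true, Jint, mem_Ico]
        push_cast
        rw [le_div_iff₀ han, div_lt_iff₀ han]
        constructor <;> linarith
      refine lt_of_lt_of_le ?_ (measure_mono hsub)
      rw [Real.volume_Ico, ENNReal.ofReal_pos, sub_pos]
      apply lt_min <;> nlinarith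
    · intro j hj
      show c j - c (j+1) = _
      rw [hcG j hj.le, hcG (j+1) hj, ← Finset.sum_sub_distrib]
      apply Finset.sum_congr rfl
      intros; ring
    · have h1 := aux_int hk (hck k le_rfl) hc univ
      rw [Measure.restrict_univ, hone] at h1
      have h2 : ∀ i : ℕ, volume.real (Ico (0:ℝ) (((i:ℝ)+1)/k) ∩ univ) = ((i:ℝ)+1)/k := by
        intro i
        rw [inter_univ, Real.volume_real_Ico_of_le (by positivity)]; ring
      simp_rw [h2, ← mul_div_assoc] at h1
      rw [← Finset.sum_div, eq_div_iff hk'.ne'] at h1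
      rw [← h1]; linarith
  have hanti : Antitone c := by
    apply antitone_nat_of_succ_le
    intro j
    rcases lt_or_ge j k with h | h
    · linarith [hb j h]
    · rw [hck j h, hck (j+1) (by omega)]
  refine ⟨fun x => c ⌊(k:ℝ) * x⌋₊, ?_, ?_⟩
  · intro x _ y _ hxy
    exact hanti (Nat.floor_mono (mul_le_mul_of_nonneg_left hxy hk'.le))
  · unfold lam
    rw [EventuallyEq, ae_restrict_iff' measurableSet_Icc]
    have : ∀ᵐ x : ℝ, x ≠ 1 := by simp [ae_iff]
    filter_upwards [this] with x hx hx'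
    have hJ : ⌊(k:ℝ) * x⌋₊ < k := by
      rw [Nat.floor_lt (mul_nonneg hk'.le hx'.1)]
      have := lt_of_le_of_ne hx'.2 hx
      nlinarith
    exact hc _ hJ x (aux_memJ hk hx'.1)
end

section
/- In the setting of Ulam's method for the approximating maps τ_n, let n ≥ N with a_n + D₁ < 1 and let k ≥ 1. (i) For every non-negative, non-increasing f ∈ L¹(I,λ): ess sup (Q^{(k)}(P_{τ_n} f)) ≤ (a_n + D₁) · ess sup f + D · ‖f‖₁. (ii) Consequently, every normalized fixed point f_{n,k} of P^{(k)}_{τ_n} (f_{n,k} constant on each J_i, f_{n,k} ≥ 0, ∫₀¹ f_{n,k} dλ = 1, Q^{(k)}(P_{τ_n} f_{n,k}) = f_{n,k} λ-a.e.) satisfies ess sup f_{n,k} ≤ D / (1 − (a_n + D₁)). -/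
open MeasureTheory Set Filter

/-- A finite system of convex increasing branches. -/
structure BrSys (σ : ℝ → ℝ) (n : ℕ) (l r s : ℕ → ℝ) : Prop where
  lt : ∀ b ≤ n, l b < r b
  nonneg : ∀ b ≤ n, 0 ≤ l b
  r_le : ∀ b ≤ n, r b ≤ 1
  cover : ∀ x ∈ Ico (0:ℝ) 1, ∃ b ≤ n, x ∈ Ico (l b) (r b)
  disj : ∀ b ≤ n, ∀ b' ≤ n, b ≠ b' → Disjoint (Ico (l b) (r b)) (Ico (l b') (r b'))
  cont : ∀ b ≤ n, ContinuousOn σ (Ico (l b) (r b))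
  conv : ∀ b ≤ n, ConvexOn ℝ (Ico (l b) (r b)) σ
  zero : ∀ b ≤ n, σ (l b) = 0
  s_pos : ∀ b ≤ n, 0 < s b
  slope : ∀ b ≤ n, ∀ x ∈ Ico (l b) (r b), ∀ y ∈ Ico (l b) (r b), x ≤ y →
    s b * (y - x) ≤ σ y - σ x
  lt_one : ∀ b ≤ n, ∀ x ∈ Ico (l b) (r b), σ x < 1
  dich : ∀ b ≤ n, 0 < l b ∨ ∃ c : ℝ, 1 < c ∧ ∀ x ∈ Ico (l b) (r b), σ x = c * x

lemma brSys_of (τ : ℝ → ℝ) (a d : ℕ → ℝ) (N : ℕ) (hτ : PCApprox τ a d N) (n : ℕ) (hn : 1 ≤ n) :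
    BrSys (tauN τ a n) n (fun b => if b < n then a (b+1) else 0) a
      (fun b => if b < n then d (b+1) else 1 / a n) := by
  have apos : ∀ m, 0 < a m := by
    intro m
    have h1 : 0 ≤ a (m+1) := hτ.a_anti.antitone.le_of_tendsto hτ.a_lim (m+1)
    exact lt_of_le_of_lt h1 (hτ.a_anti (Nat.lt_succ_self m))
  have ale : ∀ m, a m ≤ 1 := by
    intro m
    rw [← hτ.a_zero]; exact hτ.a_anti.antitone (Nat.zero_le m)
  have an1 : a n < 1 := by
    rw [← hτ.a_zero]; exact hτ.a_anti (by omega)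
  have eqT : ∀ b < n, EqOn (tauN τ a n) τ (Ico (a (b+1)) (a b)) := by
    intro b hb x hx
    have : a n ≤ a (b+1) := hτ.a_anti.antitone (by omega)
    simp only [tauN]
    rw [if_neg (by linarith [hx.1])]
  have eqL : EqOn (tauN τ a n) (fun x => x / a n) (Ico 0 (a n)) := by
    intro x hx
    simp only [tauN]
    rw [if_pos hx.2]
  have hslope : ∀ b, ∀ x ∈ Ico (a (b+1)) (a b), ∀ y ∈ Ico (a (b+1)) (a b), x ≤ y →
      d (b+1) * (y - x) ≤ τ y - τ x := by
    intro b x hx y hy hxy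
    have hl : a (b+1) ∈ Ico (a (b+1)) (a b) := ⟨le_rfl, hτ.a_anti (Nat.lt_succ_self b)⟩
    rcases hxy.eq_or_lt with rfl | hxy
    · simp
    have key : ∀ z ∈ Ico (a (b+1)) (a b), a (b+1) < z →
        d (b+1) ≤ (τ z - τ (a (b+1))) / (z - a (b+1)) := by
      intro z hz hlz
      have := (hτ.conv b).le_slope_of_hasDerivWithinAt_Ioi hl hz hlz
        ((hτ.deriv_a b).mono Ioi_subset_Ici_self)
      rwa [slope_def_field] at this
    have : d (b+1) ≤ (τ y - τ x) / (y - x) := by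
      rcases hx.1.eq_or_lt with h | h
      · rw [← h]; rw [← h] at hxy; exact key y hy hxy
      · exact (key x hx h).trans ((hτ.conv b).slope_mono_adjacent hl hy h hxy)
    rwa [le_div_iff₀ (by linarith)] at this
  constructor
  · intro b hb
    split_ifs
    · exact hτ.a_anti (Nat.lt_succ_self b)
    · exact apos b
  · intro b hb
    split_ifs
    · exact (apos _).le
    · exact le_rfl
  · intro b hb; exact ale b
  · intro x hx
    by_cases h : x < a n
    · exact ⟨n, le_rfl, by simpa using hx.1, h⟩
    · have hex : ∃ m, a m ≤ x := ⟨n, not_lt.1 h⟩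
      classical
      have h1 := Nat.find_spec hex
      have h2 : Nat.find hex ≤ n := Nat.find_min' hex (not_lt.1 h)
      obtain ⟨m, hm⟩ : ∃ m, Nat.find hex = m + 1 := by
        refine Nat.exists_eq_succ_of_ne_zero ?_
        intro h0
        rw [h0, hτ.a_zero] at h1
        linarith [hx.2]
      have h3 := Nat.find_min hex (show m < Nat.find hex by omega)
      refine ⟨m, by omega, ?_, not_le.1 h3⟩
      rw [if_pos (by omega), ← hm]; exact h1
  · have aux : ∀ b ≤ n, ∀ b' ≤ n, b < b' → Disjoint (Ico (if b < n then a (b+1) else 0) (a b))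
        (Ico (if b' < n then a (b'+1) else 0) (a b')) := by
      intro b hb b' hb' hlt
      rw [if_pos (by omega)]
      have : a b' ≤ a (b+1) := hτ.a_anti.antitone (by omega)
      rw [Set.disjoint_left]
      intro x hx hx'
      linarith [hx.1, hx'.2]
    intro b hb b' hb' hne
    rcases lt_or_gt_of_ne hne with h | h
    · exact aux b hb b' hb' h
    · exact (aux b' hb' b hb h).symm
  · intro b hb
    split_ifs with h
    · exact (hτ.cont b).congr (eqT b h)
    · obtain rfl : b = n := by omega
      exact (by fun_prop : ContinuousOn (fun x => x / a b) (Ico 0 (a b))).congr eqL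
  · intro b hb
    split_ifs with h
    · exact (hτ.conv b).congr (eqT b h).symm
    · obtain rfl : b = n := by omega
      refine ConvexOn.congr ?_ eqL.symm
      refine ⟨convex_Ico _ _, ?_⟩
      intro x _ y _ p q _ _ _
      simp only [smul_eq_mul]
      apply le_of_eq; ring
  · intro b hb
    split_ifs with h
    · rw [eqT b h ⟨le_rfl, hτ.a_anti (Nat.lt_succ_self b)⟩, hτ.map_a]
    · rw [eqL ⟨le_rfl, apos n⟩]; simp
  · intro b hb
    split_ifs with h
    · exact hτ.d_pos b
    · exact one_div_pos.2 (apos n)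
  · intro b hb
    split_ifs with h
    · intro x hx y hy hxy
      rw [eqT b h hx, eqT b h hy]
      exact hslope b x hx y hy hxy
    · obtain rfl : b = n := by omega
      intro x hx y hy hxy
      rw [eqL hx, eqL hy]
      apply le_of_eq; ring
  · intro b hb
    split_ifs with h
    · intro x hx
      rw [eqT b h hx]
      have hy : (x + a b) / 2 ∈ Ico (a (b+1)) (a b) := ⟨by linarith [hx.1, hx.2], by linarith [hx.2]⟩
      have h1 := hslope b x hx _ hy (by linarith [hx.2])
      have h2 : 0 < d (b+1) * ((x + a b) / 2 - x) :=
        mul_pos (hτ.d_pos b) (by linarith [hx.2])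
      have h3 := (hτ.mapsTo (show (x + a b) / 2 ∈ Icc (0:ℝ) 1 from
        ⟨by linarith [hy.1, apos (b+1)], by linarith [hy.2, ale b]⟩)).2
      linarith
    · obtain rfl : b = n := by omega
      intro x hx
      rw [eqL hx]
      exact (div_lt_one (apos b)).2 hx.2
  · intro b hb
    split_ifs with h
    · exact Or.inl (apos _)
    · obtain rfl : b = n := by omega
      refine Or.inr ⟨1 / a b, by rw [lt_div_iff₀ (apos b)]; linarith, ?_⟩
      intro x hx
      rw [eqL hx]; ring

namespace BrSys
variable {σ : ℝ → ℝ} {n : ℕ} {l r s : ℕ → ℝ}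

lemma left_mem (H : BrSys σ n l r s) {b : ℕ} (hb : b ≤ n) : l b ∈ Ico (l b) (r b) :=
  ⟨le_rfl, H.lt b hb⟩

lemma strictMono (H : BrSys σ n l r s) {b : ℕ} (hb : b ≤ n) :
    StrictMonoOn σ (Ico (l b) (r b)) := by
  intro x hx y hy hxy
  have := H.slope b hb x hx y hy hxy.le
  have := mul_pos (H.s_pos b hb) (sub_pos.2 hxy)
  linarith

lemma val_nonneg (H : BrSys σ n l r s) {b : ℕ} (hb : b ≤ n) {x : ℝ} (hx : x ∈ Ico (l b) (r b)) :
    0 ≤ σ x := by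
  rw [← H.zero b hb]
  exact (H.strictMono hb).monotoneOn (H.left_mem hb) hx hx.1

lemma mapsTo (H : BrSys σ n l r s) {x : ℝ} (hx : x ∈ Ico (0:ℝ) 1) : σ x ∈ Ico (0:ℝ) 1 := by
  obtain ⟨b, hb, hxb⟩ := H.cover x hx
  exact ⟨H.val_nonneg hb hxb, H.lt_one b hb x hxb⟩

lemma sub (H : BrSys σ n l r s) {b : ℕ} (hb : b ≤ n) : Ico (l b) (r b) ⊆ Ico (0:ℝ) 1 :=
  fun _ hx => ⟨(H.nonneg b hb).trans hx.1, hx.2.trans_le (H.r_le b hb)⟩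

/-- intermediate values -/
lemma ivt (H : BrSys σ n l r s) {b : ℕ} (hb : b ≤ n) {x y c : ℝ} (hx : x ∈ Ico (l b) (r b))
    (hy : y ∈ Ico (l b) (r b)) (hxy : x ≤ y) (h1 : σ x ≤ c) (h2 : c ≤ σ y) :
    ∃ z ∈ Icc x y, σ z = c := by
  have hs : Icc x y ⊆ Ico (l b) (r b) := fun z hz => ⟨hx.1.trans hz.1, hz.2.trans_lt hy.2⟩
  exact intermediate_value_Icc hxy ((H.cont b hb).mono hs) ⟨h1, h2⟩

end BrSys

lemma mem_Jint_iff {k : ℕ} (hk : 1 ≤ k) {x : ℝ} (hx : 0 ≤ x) (i : ℕ) :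
    x ∈ Jint k i ↔ ⌊k * x⌋₊ = i := by
  have hk' : (0:ℝ) < k := by exact_mod_cast hk
  rw [Nat.floor_eq_iff (by positivity), Jint, mem_Ico, div_le_iff₀ hk', lt_div_iff₀ hk',
    mul_comm x]

lemma Jint_sub {k : ℕ} (hk : 1 ≤ k) {i : ℕ} (hi : i < k) : Jint k i ⊆ Ico (0:ℝ) 1 := by
  have hk' : (0:ℝ) < k := by exact_mod_cast hk
  intro x hx
  refine ⟨le_trans (by positivity) hx.1, hx.2.trans_le ?_⟩
  rw [div_le_one hk']; exact_mod_cast hi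

lemma floor_lt {k : ℕ} (hk : 1 ≤ k) {x : ℝ} (hx : x ∈ Ico (0:ℝ) 1) : ⌊k * x⌋₊ < k := by
  have hk' : (0:ℝ) < k := by exact_mod_cast hk
  rw [Nat.floor_lt (by have := hx.1; positivity)]
  nlinarith [hx.2]

lemma Jint_disj {k : ℕ} (hk : 1 ≤ k) {i j : ℕ} (hij : i ≠ j) :
    Disjoint (Jint k i) (Jint k j) := by
  rw [Set.disjoint_left]
  intro x hx hy
  have h0 : 0 ≤ x := le_trans (by positivity) hx.1
  rw [mem_Jint_iff hk h0] at hx hy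
  exact hij (hx.symm.trans hy)

lemma Jint_meas (k i : ℕ) : MeasurableSet (Jint k i) := measurableSet_Ico

instance lam_finite : IsFiniteMeasure lam := by unfold lam; infer_instance

lemma lam_le (s : Set ℝ) : lam s ≤ volume s := Measure.restrict_apply_le _ _

lemma lam_real_Ico {p q : ℝ} (h0 : 0 ≤ p) (hpq : p ≤ q) (h1 : q ≤ 1) :
    lam.real (Ico p q) = q - p := by
  rw [lam, measureReal_restrict_apply measurableSet_Ico, inter_eq_left.2,
    Real.volume_real_Ico_of_le hpq]
  exact fun x hx => ⟨h0.trans hx.1, hx.2.le.trans h1⟩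

lemma lam_ae : ∀ᵐ x ∂lam, x ∈ Ico (0:ℝ) 1 := by
  have : lam = volume.restrict (Ico (0:ℝ) 1) := by
    rw [lam, Measure.restrict_congr_set Ico_ae_eq_Icc]
  rw [this]
  exact ae_restrict_mem measurableSet_Ico

lemma lam_real_Jint {k : ℕ} (hk : 1 ≤ k) {i : ℕ} (hi : i < k) : lam.real (Jint k i) = 1 / k := by
  have hk' : (0:ℝ) < k := by exact_mod_cast hk
  rw [Jint, lam_real_Ico (by positivity) (by gcongr; linarith)]
  · field_simp; ring
  · rw [div_le_one hk']; exact_mod_cast hi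

/-- part of the preimage of `J_j` in branch `b` -/
def Eset (σ : ℝ → ℝ) (l r : ℕ → ℝ) (k b j : ℕ) : Set ℝ := Ico (l b) (r b) ∩ σ ⁻¹' (Jint k j)

namespace BrSys
variable {σ : ℝ → ℝ} {n : ℕ} {l r s : ℕ → ℝ}

lemma E_meas (H : BrSys σ n l r s) {b : ℕ} (hb : b ≤ n) (k j : ℕ) :
    MeasurableSet (Eset σ l r k b j) := by
  apply Set.OrdConnected.measurableSet
  constructor
  intro x hx y hy z hz
  have hzb : z ∈ Ico (l b) (r b) := ⟨hx.1.1.trans hz.1, hz.2.trans_lt hy.1.2⟩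
  have hm := (H.strictMono hb).monotoneOn
  exact ⟨hzb, hx.2.1.trans (hm hx.1 hzb hz.1), (hm hzb hy.1 hz.2).trans_lt hy.2.2⟩

lemma E_vol (H : BrSys σ n l r s) {b : ℕ} (hb : b ≤ n) {k : ℕ} (hk : 1 ≤ k) (j : ℕ) :
    lam.real (Eset σ l r k b j) ≤ 1 / k * (1 / s b) := by
  have hk' : (0:ℝ) < k := by exact_mod_cast hk
  have hs := H.s_pos b hb
  have aux : ∀ x ∈ Eset σ l r k b j, ∀ y ∈ Eset σ l r k b j, x ≤ y → y - x ≤ 1 / k * (1 / s b) := by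
    intro x hx y hy hxy
    have h1 := H.slope b hb x hx.1 y hy.1 hxy
    have h2 : σ y < ((j:ℝ)+1)/k := hy.2.2
    have h3 : (j:ℝ)/k ≤ σ x := hx.2.1
    have h4 : ((j:ℝ)+1)/k - j/k = 1/k := by field_simp; ring
    have h5 : 1 / (k:ℝ) * (1 / s b) = (1/k) / s b := by ring
    rw [h5, le_div_iff₀ hs]
    nlinarith
  have h : lam (Eset σ l r k b j) ≤ ENNReal.ofReal (1 / k * (1 / s b)) := by
    refine (lam_le _).trans ((Real.volume_le_diam _).trans (Metric.ediam_le ?_))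
    intro x hx y hy
    rw [edist_dist]
    apply ENNReal.ofReal_le_ofReal
    rw [Real.dist_eq]
    rcases le_total x y with hxy | hxy
    · rw [abs_of_nonpos (by linarith)]; linarith [aux x hx y hy hxy]
    · rw [abs_of_nonneg (by linarith)]; exact aux y hy x hx hxy
  exact ENNReal.toReal_le_of_le_ofReal (by positivity) h

lemma preim_eq (H : BrSys σ n l r s) (k j : ℕ) :
    Ico (0:ℝ) 1 ∩ σ ⁻¹' (Jint k j) = ⋃ b ∈ Finset.range (n+1), Eset σ l r k b j := by
  ext x
  simp only [mem_iUnion, Finset.mem_range, exists_prop]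
  constructor
  · rintro ⟨hx, hj⟩
    obtain ⟨b, hb, hxb⟩ := H.cover x hx
    exact ⟨b, by omega, hxb, hj⟩
  · rintro ⟨b, hb, hxb, hj⟩
    exact ⟨H.sub (by omega) hxb, hj⟩

lemma preim_meas (H : BrSys σ n l r s) (k j : ℕ) :
    MeasurableSet (Ico (0:ℝ) 1 ∩ σ ⁻¹' (Jint k j)) := by
  rw [H.preim_eq]
  refine Finset.measurableSet_biUnion _ ?_
  intro b hb
  exact H.E_meas (by simp at hb; omega) k j

lemma preim_int (H : BrSys σ n l r s) (k j : ℕ) {f : ℝ → ℝ} (hf : Integrable f lam) :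
    ∫ x in σ ⁻¹' (Jint k j), f x ∂lam
      = ∑ b ∈ Finset.range (n+1), ∫ x in Eset σ l r k b j, f x ∂lam := by
  have h1 : (σ ⁻¹' (Jint k j) : Set ℝ) =ᵐ[lam] (Ico (0:ℝ) 1 ∩ σ ⁻¹' (Jint k j) : Set ℝ) := by
    filter_upwards [lam_ae] with x hx
    apply propext
    exact ⟨fun h => ⟨hx, h⟩, fun h => h.2⟩
  rw [setIntegral_congr_set h1, H.preim_eq, integral_biUnion_finset]
  · intro b hb; exact H.E_meas (by simp at hb; omega) k j
  · intro b hb b' hb' hne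
    simp at hb hb'
    exact (H.disj b (by omega) b' (by omega) hne).mono inter_subset_left inter_subset_left
  · intro b hb; exact hf.integrableOn

/-- monotonicity of the transfer operator on one branch -/
lemma E_mono (H : BrSys σ n l r s) {b : ℕ} (hb : b ≤ n) {k : ℕ} (hk : 1 ≤ k) (j : ℕ)
    {f : ℝ → ℝ} (hf : Integrable f lam) (h0 : ∀ x ∈ Icc (0:ℝ) 1, 0 ≤ f x)
    (ha : AntitoneOn f (Icc 0 1)) :
    ∫ x in Eset σ l r k b (j+1), f x ∂lam ≤ ∫ x in Eset σ l r k b j, f x ∂lam := by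
  have hk' : (0:ℝ) < k := by exact_mod_cast hk
  have hsub : Ico (l b) (r b) ⊆ Icc (0:ℝ) 1 := (H.sub hb).trans Ico_subset_Icc_self
  rcases (Eset σ l r k b (j+1)).eq_empty_or_nonempty with he | ⟨y, hy⟩
  · rw [he]; simp only [Measure.restrict_empty, integral_zero_measure]
    exact setIntegral_nonneg (H.E_meas hb k j) (fun x hx => h0 x (hsub hx.1))
  have hy1 : ((j:ℝ)+1)/k ≤ σ y := by have := hy.2.1; push_cast at this; exact this
  have hh : ((j:ℝ)+1)/k - j/k = 1/k := by field_simp; ring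
  have hh' : ((j:ℝ)+1+1)/k - (j+1)/k = 1/k := by field_simp; ring
  have hkp : 0 < 1/(k:ℝ) := by positivity
  have hj0 : (0:ℝ) ≤ (j:ℝ)/k := by positivity
  obtain ⟨q, hq, hqs⟩ := H.ivt hb (H.left_mem hb) hy.1 hy.1.1
    (by rw [H.zero b hb]; linarith) hy1
  have hqb : q ∈ Ico (l b) (r b) := ⟨hq.1, hq.2.trans_lt hy.1.2⟩
  obtain ⟨p, hp, hps⟩ := H.ivt (c := (j:ℝ)/k) hb (H.left_mem hb) hqb hqb.1
    (by rw [H.zero b hb]; linarith) (by rw [hqs]; linarith)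
  have hpb : p ∈ Ico (l b) (r b) := ⟨hp.1, hp.2.trans_lt hqb.2⟩
  have hsm := H.strictMono hb
  have hpq : p < q := (hsm.lt_iff_lt hpb hqb).1 (by rw [hps, hqs]; linarith)
  have hsub1 : Ico p q ⊆ Eset σ l r k b j := by
    intro x hx
    have hxb : x ∈ Ico (l b) (r b) := ⟨hpb.1.trans hx.1, hx.2.trans hqb.2⟩
    refine ⟨hxb, ?_, ?_⟩
    · rw [← hps]; exact hsm.monotoneOn hpb hxb hx.1
    · rw [← hqs]; exact hsm hxb hqb hx.2
  have hge : ∀ x ∈ Eset σ l r k b (j+1), q ≤ x := by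
    intro x hx
    refine (hsm.le_iff_le hqb hx.1).1 ?_
    rw [hqs]; have := hx.2.1; push_cast at this; exact this
  have hsub2 : Eset σ l r k b (j+1) ⊆ Ico q (2*q-p) := by
    intro x hx
    refine ⟨hge x hx, ?_⟩
    rcases (hge x hx).eq_or_lt with h | h
    · linarith
    have h1 := (H.conv b hb).slope_mono_adjacent hpb hx.1 hpq h
    have h2 : σ x < ((j:ℝ)+1+1)/k := by have := hx.2.2; push_cast at this; exact this
    rw [div_le_div_iff₀ (by linarith) (by linarith)] at h1
    have e1 : σ q - σ p = 1/k := by rw [hqs, hps, hh]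
    have e2 : σ x - σ q < 1/k := by rw [hqs]; linarith
    rw [e1] at h1
    have h3 : 1/(k:ℝ) * (x - q) < 1/k * (q - p) :=
      h1.trans_lt (mul_lt_mul_of_pos_right e2 (by linarith))
    have := lt_of_mul_lt_mul_left h3 hkp.le
    linarith
  have hvol : lam.real (Eset σ l r k b (j+1)) ≤ q - p := by
    have : lam (Eset σ l r k b (j+1)) ≤ ENNReal.ofReal (q - p) := by
      refine (lam_le _).trans ((measure_mono hsub2).trans ?_)
      rw [Real.volume_Ico]; apply ENNReal.ofReal_le_ofReal; linarith
    exact ENNReal.toReal_le_of_le_ofReal (by linarith) this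
  calc ∫ x in Eset σ l r k b (j+1), f x ∂lam
      ≤ ∫ x in Eset σ l r k b (j+1), f q ∂lam := by
        refine setIntegral_mono_on hf.integrableOn (integrable_const _).integrableOn
          (H.E_meas hb k _) ?_
        intro x hx
        exact ha (hsub hqb) (hsub hx.1) (hge x hx)
    _ = lam.real (Eset σ l r k b (j+1)) * f q := by rw [setIntegral_const, smul_eq_mul]
    _ ≤ (q - p) * f q := mul_le_mul_of_nonneg_right hvol (h0 q (hsub hqb))
    _ = ∫ x in Ico p q, f q ∂lam := by
        rw [setIntegral_const, smul_eq_mul, lam_real_Ico (hsub hpb).1 hpq.le (hsub hqb).2]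
    _ ≤ ∫ x in Ico p q, f x ∂lam := by
        refine setIntegral_mono_on (integrable_const _).integrableOn hf.integrableOn
          measurableSet_Ico ?_
        intro x hx
        exact ha (hsub (hsub1 hx).1) (hsub hqb) hx.2.le
    _ ≤ ∫ x in Eset σ l r k b j, f x ∂lam := by
        refine setIntegral_mono_set hf.integrableOn ?_ (Filter.Eventually.of_forall hsub1)
        filter_upwards [ae_restrict_mem (H.E_meas hb k j)] with x hx
        exact h0 x (hsub hx.1)

lemma E_bound (H : BrSys σ n l r s) {b : ℕ} (hb : b ≤ n) {k : ℕ} (hk : 1 ≤ k) (j : ℕ)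
    {f : ℝ → ℝ} (hf : Integrable f lam) {B : ℝ} (hB : 0 ≤ B)
    (hfB : ∀ᵐ x ∂lam, x ∈ Ico (l b) (r b) → f x ≤ B) :
    ∫ x in Eset σ l r k b j, f x ∂lam ≤ 1 / k * (1 / s b) * B := by
  calc ∫ x in Eset σ l r k b j, f x ∂lam
      ≤ ∫ x in Eset σ l r k b j, B ∂lam := by
        refine setIntegral_mono_on_ae hf.integrableOn (integrable_const _).integrableOn
          (H.E_meas hb k _) ?_
        filter_upwards [hfB] with x hx h
        exact hx h.1
    _ = lam.real (Eset σ l r k b j) * B := by rw [setIntegral_const, smul_eq_mul]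
    _ ≤ _ := mul_le_mul_of_nonneg_right (H.E_vol hb hk j) hB

end BrSys

lemma core_bound (τ : ℝ → ℝ) (a d : ℕ → ℝ) (N : ℕ)
    (hτ : PCApprox τ a d N) (n k : ℕ) (hn : N ≤ n) (hk : 1 ≤ k) (f : ℝ → ℝ)
    (hf : Integrable f lam) (h0 : ∀ x ∈ Icc (0:ℝ) 1, 0 ≤ f x) (ha : AntitoneOn f (Icc 0 1))
    (M : ℝ) (hM : 0 ≤ M) (hfM : ∀ᵐ x ∂lam, f x ≤ M) (j : ℕ) :
    k * ∫ x in (tauN τ a n) ⁻¹' (Jint k j), f x ∂lam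
      ≤ (a n + D₁ d N) * M + Dconst a d N * ∫ x, f x ∂lam := by
  have hN := hτ.N_pos
  have H := brSys_of τ a d N hτ n (by omega)
  have hk' : (0:ℝ) < k := by exact_mod_cast hk
  have apos : ∀ m, 0 < a m := by
    intro m
    have h1 : 0 ≤ a (m+1) := hτ.a_anti.antitone.le_of_tendsto hτ.a_lim (m+1)
    exact lt_of_le_of_lt h1 (hτ.a_anti (Nat.lt_succ_self m))
  have ale : ∀ m, a m ≤ 1 := by
    intro m
    rw [← hτ.a_zero]; exact hτ.a_anti.antitone (Nat.zero_le m)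
  have hI0 : ∀ᵐ x ∂lam, 0 ≤ f x := by
    filter_upwards [lam_ae] with x hx
    exact h0 x ⟨hx.1, hx.2.le⟩
  set I := ∫ x, f x ∂lam with hI
  have hIpos : 0 ≤ I := integral_nonneg_of_ae hI0
  have hpt : ∀ m, ∀ x, a m ≤ x → x ≤ 1 → f x ≤ I / a m := by
    intro m x hx hx1
    rw [le_div_iff₀ (apos m)]
    calc f x * a m = ∫ y in Ico 0 (a m), f x ∂lam := by
          rw [setIntegral_const, smul_eq_mul, lam_real_Ico le_rfl (apos m).le (ale m)]; ring
      _ ≤ ∫ y in Ico 0 (a m), f y ∂lam := by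
          refine setIntegral_mono_on (integrable_const _).integrableOn hf.integrableOn
            measurableSet_Ico ?_
          intro y hy
          exact ha ⟨hy.1, hy.2.le.trans (ale m)⟩ ⟨(apos m).le.trans hx, hx1⟩ (hy.2.le.trans hx)
      _ ≤ I := setIntegral_le_integral hf hI0
  rw [H.preim_int k j hf, Finset.sum_range_succ, ← Nat.add_sub_of_le hn, Finset.sum_range_add,
    Nat.add_sub_of_le hn]
  have e1 : ∑ b ∈ Finset.range N, ∫ x in Eset (tauN τ a n) (fun b => if b < n then a (b+1) else 0) a k b j, f x ∂lam
      ≤ ∑ b ∈ Finset.range N, 1 / k * ((1 / (a (b+1) * d (b+1))) * I) := by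
    refine Finset.sum_le_sum ?_
    intro b hb
    have hbN := Finset.mem_range.1 hb
    refine (H.E_bound (b := b) (by omega) hk j hf (B := I / a (b+1))
      (div_nonneg hIpos (apos _).le) ?_).trans ?_
    · refine Filter.Eventually.of_forall ?_
      intro x hx
      simp only [if_pos (show b < n by omega)] at hx
      exact hpt _ x hx.1 (hx.2.le.trans (ale b))
    · simp only [if_pos (show b < n by omega)]
      have := (apos (b+1)).ne'
      have := (hτ.d_pos b).ne'
      apply le_of_eq; field_simp
  have e2 : ∑ b ∈ Finset.range (n - N), ∫ x in Eset (tauN τ a n) (fun b => if b < n then a (b+1) else 0) a k (N + b) j, f x ∂lam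
      ≤ ∑ b ∈ Finset.range (n - N), 1 / k * ((1 / d (b + N + 1)) * M) := by
    refine Finset.sum_le_sum ?_
    intro b hb
    have hbN := Finset.mem_range.1 hb
    refine (H.E_bound (b := N + b) (by omega) hk j hf (B := M) hM ?_).trans ?_
    · filter_upwards [hfM] with x hx _ using hx
    · simp only [if_pos (show N + b < n by omega)]
      rw [show N + b + 1 = b + N + 1 by omega]
      apply le_of_eq; ring
  have e3 : ∫ x in Eset (tauN τ a n) (fun b => if b < n then a (b+1) else 0) a k n j, f x ∂lam
      ≤ 1 / k * (a n * M) := by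
    refine (H.E_bound (b := n) le_rfl hk j hf (B := M) hM ?_).trans ?_
    · filter_upwards [hfM] with x hx _ using hx
    · simp only [lt_irrefl, if_false]
      rw [one_div_one_div]
      apply le_of_eq; ring
  have e4 : ∑ b ∈ Finset.range (n - N), (1 / d (b + N + 1)) ≤ D₁ d N := by
    refine Summable.sum_le_tsum _ (fun b _ => (one_div_pos.2 (hτ.d_pos _)).le) ?_
    have := (summable_nat_add_iff N).2 hτ.sum_d
    exact this
  have e5 := mul_le_mul_of_nonneg_right e4 hM
  rw [← Finset.mul_sum, ← Finset.sum_mul] at e1 e2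
  have e6 : ∑ b ∈ Finset.range N, 1 / (a (b+1) * d (b+1)) = Dconst a d N := rfl
  rw [e6] at e1
  have e7 : (k:ℝ) * (1 / k * (Dconst a d N * I) + 1 / k * ((∑ b ∈ Finset.range (n - N), (1 / d (b + N + 1))) * M) + 1 / k * (a n * M))
     = Dconst a d N * I + (∑ b ∈ Finset.range (n - N), (1 / d (b + N + 1))) * M + a n * M := by
    field_simp
  refine (mul_le_mul_of_nonneg_left (add_le_add (add_le_add e1 e2) e3) hk'.le).trans ?_
  rw [e7]
  linarith

/-- transition probabilities -/
noncomputable def pm (σ : ℝ → ℝ) (k i j : ℕ) : ℝ :=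
  k * lam.real (Jint k i ∩ σ ⁻¹' (Jint k j))

/-- Ulam operator in coordinates -/
noncomputable def Tm (σ : ℝ → ℝ) (k : ℕ) (w : ℕ → ℝ) (j : ℕ) : ℝ :=
  if j < k then ∑ i ∈ Finset.range k, w i * pm σ k i j else 0

lemma pm_nonneg (σ : ℝ → ℝ) (k i j : ℕ) : 0 ≤ pm σ k i j := by unfold pm; positivity

lemma step_int {k : ℕ} (hk : 1 ≤ k) {f : ℝ → ℝ} (hf : Integrable f lam) (w : ℕ → ℝ)
    (hw : ∀ i < k, ∀ x ∈ Jint k i, f x = w i) (S : Set ℝ)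
    (hS : MeasurableSet (Ico (0:ℝ) 1 ∩ S)) :
    k * ∫ x in S, f x ∂lam = ∑ i ∈ Finset.range k, w i * (k * lam.real (Jint k i ∩ S)) := by
  have hm : ∀ i ∈ Finset.range k, MeasurableSet (Jint k i ∩ S) := by
    intro i hi
    have : Jint k i ∩ S = Jint k i ∩ (Ico (0:ℝ) 1 ∩ S) := by
      rw [← inter_assoc, inter_eq_left.2 (Jint_sub hk (Finset.mem_range.1 hi))]
    rw [this]; exact (Jint_meas k i).inter hS
  have h1 : (S : Set ℝ) =ᵐ[lam] (⋃ i ∈ Finset.range k, (Jint k i ∩ S) : Set ℝ) := by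
    filter_upwards [lam_ae] with x hx
    apply propext
    constructor
    · intro h
      have : x ∈ ⋃ i ∈ Finset.range k, (Jint k i ∩ S) := by
        simp only [mem_iUnion, Finset.mem_range, exists_prop]
        exact ⟨_, floor_lt hk hx, (mem_Jint_iff hk hx.1 _).2 rfl, h⟩
      exact this
    · intro h
      have h' : x ∈ ⋃ i ∈ Finset.range k, (Jint k i ∩ S) := h
      simp only [mem_iUnion, exists_prop] at h'
      obtain ⟨i, _, _, h3⟩ := h'
      exact h3
  rw [setIntegral_congr_set h1, integral_biUnion_finset _ hm, Finset.mul_sum]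
  · refine Finset.sum_congr rfl ?_
    intro i hi
    rw [setIntegral_congr_fun (g := fun _ => w i) (hm i hi)
      (fun x hx => hw i (Finset.mem_range.1 hi) x hx.1), setIntegral_const, smul_eq_mul]
    ring
  · intro i _ i' _ hne
    exact (Jint_disj hk hne).mono inter_subset_left inter_subset_left
  · intro i _; exact hf.integrableOn

namespace BrSys
variable {σ : ℝ → ℝ} {n : ℕ} {l r s : ℕ → ℝ}

lemma Tm_eq (H : BrSys σ n l r s) {k : ℕ} (hk : 1 ≤ k) {f : ℝ → ℝ} (hf : Integrable f lam)
    (w : ℕ → ℝ) (hw : ∀ i < k, ∀ x ∈ Jint k i, f x = w i) {j : ℕ} (hj : j < k) :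
    Tm σ k w j = k * ∫ x in σ ⁻¹' (Jint k j), f x ∂lam := by
  rw [step_int hk hf w hw _ (H.preim_meas k j), Tm, if_pos hj]
  rfl

lemma pm_sum (H : BrSys σ n l r s) {k : ℕ} (hk : 1 ≤ k) {i : ℕ} (hi : i < k) :
    ∑ j ∈ Finset.range k, pm σ k i j = 1 := by
  have hk' : (0:ℝ) < k := by exact_mod_cast hk
  unfold pm
  rw [← Finset.mul_sum, ← measureReal_biUnion_finset]
  · have : (⋃ j ∈ Finset.range k, Jint k i ∩ σ ⁻¹' (Jint k j)) = Jint k i := by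
      ext x
      simp only [mem_iUnion, Finset.mem_range, exists_prop]
      constructor
      · rintro ⟨j, _, h, _⟩; exact h
      · intro h
        have hx := H.mapsTo (Jint_sub hk hi h)
        exact ⟨_, floor_lt hk hx, h, (mem_Jint_iff hk hx.1 _).2 rfl⟩
    rw [this, lam_real_Jint hk hi]
    field_simp
  · intro j _ j' _ hne
    exact ((Jint_disj hk hne).preimage σ).mono inter_subset_right inter_subset_right
  · intro j _
    have : Jint k i ∩ σ ⁻¹' (Jint k j) = Jint k i ∩ (Ico (0:ℝ) 1 ∩ σ ⁻¹' (Jint k j)) := by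
      rw [← inter_assoc, inter_eq_left.2 (Jint_sub hk hi)]
    rw [this]; exact (Jint_meas k i).inter (H.preim_meas k j)

lemma Tm_sum (H : BrSys σ n l r s) {k : ℕ} (hk : 1 ≤ k) (w : ℕ → ℝ) :
    ∑ j ∈ Finset.range k, Tm σ k w j = ∑ i ∈ Finset.range k, w i := by
  have : ∑ j ∈ Finset.range k, Tm σ k w j
      = ∑ j ∈ Finset.range k, ∑ i ∈ Finset.range k, w i * pm σ k i j :=
    Finset.sum_congr rfl fun j hj => by rw [Tm, if_pos (Finset.mem_range.1 hj)]
  rw [this, Finset.sum_comm]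
  refine Finset.sum_congr rfl fun i hi => ?_
  rw [← Finset.mul_sum, H.pm_sum hk (Finset.mem_range.1 hi), mul_one]

lemma pm_pos (H : BrSys σ n l r s) {k : ℕ} (hk : 1 ≤ k) {y : ℝ} (hy : y ∈ Ico (0:ℝ) 1) :
    0 < pm σ k ⌊k * y⌋₊ ⌊k * σ y⌋₊ := by
  have hk' : (0:ℝ) < k := by exact_mod_cast hk
  obtain ⟨b, hb, hyb⟩ := H.cover y hy
  have hyJ : y ∈ Jint k ⌊k * y⌋₊ := (mem_Jint_iff hk hy.1 _).2 rfl
  have hsJ : σ y ∈ Jint k ⌊k * σ y⌋₊ := (mem_Jint_iff hk (H.mapsTo hy).1 _).2 rfl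
  have m1 : Ico (l b) (r b) ∈ nhdsWithin y (Ici y) :=
    mem_of_superset (Ico_mem_nhdsGE hyb.2) (Ico_subset_Ico_left hyb.1)
  have m2 : Jint k ⌊k * y⌋₊ ∈ nhdsWithin y (Ici y) :=
    mem_of_superset (Ico_mem_nhdsGE hyJ.2) (Ico_subset_Ico_left hyJ.1)
  have m3 : ∀ᶠ z in nhdsWithin y (Ici y), σ z < ((⌊k * σ y⌋₊ : ℝ) + 1) / k := by
    have hc : ContinuousWithinAt σ (Ico y (r b)) y :=
      (H.cont b hb y hyb).mono (Ico_subset_Ico_left hyb.1)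
    have := hc.eventually (gt_mem_nhds hsJ.2)
    rwa [nhdsWithin_Ico_eq_nhdsGE hyb.2] at this
  have m4 : {z | (z ∈ Ico (l b) (r b) ∧ z ∈ Jint k ⌊k * y⌋₊) ∧ σ z < ((⌊k * σ y⌋₊ : ℝ) + 1) / k}
      ∈ nhdsWithin y (Ici y) := Filter.inter_mem (Filter.inter_mem m1 m2) m3
  obtain ⟨u, hu, hsub⟩ := mem_nhdsGE_iff_exists_Ico_subset.1 m4
  have hu' : y < u := hu
  have hu1 : u ≤ 1 := by
    by_contra hcon
    push Not at hcon
    have h1 := (hsub (show (1:ℝ) ∈ Ico y u from ⟨hy.2.le, hcon⟩)).1.1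
    exact absurd (H.sub hb h1).2 (lt_irrefl _)
  have hsub2 : Ico y u ⊆ Jint k ⌊k * y⌋₊ ∩ σ ⁻¹' (Jint k ⌊k * σ y⌋₊) := by
    intro z hz
    obtain ⟨⟨h1, h2⟩, h3⟩ := hsub hz
    refine ⟨h2, ?_, h3⟩
    exact hsJ.1.trans ((H.strictMono hb).monotoneOn hyb h1 hz.1)
  have h5 : u - y ≤ lam.real (Jint k ⌊k * y⌋₊ ∩ σ ⁻¹' (Jint k ⌊k * σ y⌋₊)) := by
    rw [← lam_real_Ico hy.1 hu'.le hu1]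
    exact measureReal_mono hsub2
  unfold pm
  exact mul_pos hk' (by linarith)

lemma right_end (H : BrSys σ n l r s) {b : ℕ} (hb : b ≤ n) (h1 : r b < 1) : σ (r b) = 0 := by
  have h0 : 0 ≤ r b := (H.nonneg b hb).trans (H.lt b hb).le
  obtain ⟨b', hb', hm⟩ := H.cover (r b) ⟨h0, h1⟩
  have hne : b ≠ b' := by rintro rfl; exact lt_irrefl _ hm.2
  rcases hm.1.eq_or_lt with h | h
  · rw [← h]; exact H.zero b' hb'
  · exfalso
    have hd := Set.disjoint_left.1 (H.disj b hb b' hb' hne)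
    have hlt := H.lt b hb
    exact hd (a := max (l b) (l b')) ⟨le_max_left _ _, max_lt hlt h⟩
      ⟨le_max_right _ _, (max_lt hlt h).trans hm.2⟩

/-- support of a nonzero nonnegative fixed vector contains state `0` -/
lemma key (H : BrSys σ n l r s) {k : ℕ} (hk : 1 ≤ k) (w : ℕ → ℝ) (h0 : ∀ i, 0 ≤ w i)
    (hT : Tm σ k w = w) {i₀ : ℕ} (hi₀ : i₀ < k) (hpos : 0 < w i₀) : 0 < w 0 := by
  have hk' : (0:ℝ) < k := by exact_mod_cast hk
  have closed : ∀ y ∈ Ico (0:ℝ) 1, 0 < w ⌊k * y⌋₊ → 0 < w ⌊k * σ y⌋₊ := by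
    intro y hy hwy
    have hlt := floor_lt hk (H.mapsTo hy)
    have : Tm σ k w ⌊k * σ y⌋₊ = w ⌊k * σ y⌋₊ := by rw [hT]
    rw [← this, Tm, if_pos hlt]
    refine lt_of_lt_of_le (mul_pos hwy (H.pm_pos hk hy)) ?_
    exact Finset.single_le_sum (f := fun i => w i * pm σ k i ⌊k * σ y⌋₊)
      (fun i _ => mul_nonneg (h0 i) (pm_nonneg _ _ _ _)) (Finset.mem_range.2 (floor_lt hk hy))
  by_contra hcon
  have hne0 : ∀ i, 0 < w i → 1 ≤ i := by
    intro i hi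
    rcases Nat.eq_zero_or_pos i with h | h
    · subst h; exact absurd hi hcon
    · exact h
  let P : ℕ × ℕ → Prop := fun q => q.1 < q.2 ∧ q.2 ≤ k ∧ ∀ i, q.1 ≤ i → i < q.2 → 0 < w i
  have step : ∀ q, P q → ∃ q', P q' ∧ (q.2:ℝ) * q'.1 ≤ q'.2 * q.1 ∧
      ((q.2:ℝ) * q'.1 < q'.2 * q.1 ∨ (q.2:ℝ) < q'.2) := by
    rintro ⟨j, L⟩ ⟨hjL, hLk, hw⟩
    simp only at hjL hLk hw
    have hj1 := hne0 j (hw j le_rfl hjL)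
    have hj1' : (0:ℝ) < j := by exact_mod_cast hj1
    have hjL' : (j:ℝ) < L := by exact_mod_cast hjL
    have hLk' : (L:ℝ) ≤ k := by exact_mod_cast hLk
    set u : ℝ := j / k with hu
    set v : ℝ := L / k with hv
    have hku : k * u = j := by rw [hu]; field_simp
    have hkv : k * v = L := by rw [hv]; field_simp
    have huv : u < v := by rw [hu, hv]; gcongr
    have hu0 : 0 < u := by rw [hu]; positivity
    have hv1 : v ≤ 1 := by rw [hv, div_le_one hk']; exact hLk'
    have hrun : ∀ y ∈ Ico u v, y ∈ Ico (0:ℝ) 1 ∧ 0 < w ⌊k * σ y⌋₊ := by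
      intro y hy
      have hy01 : y ∈ Ico (0:ℝ) 1 := ⟨hu0.le.trans hy.1, hy.2.trans_le hv1⟩
      refine ⟨hy01, closed y hy01 (hw _ ?_ ?_)⟩
      · apply Nat.le_floor; rw [← hku]; exact mul_le_mul_of_nonneg_left hy.1 hk'.le
      · rw [Nat.floor_lt (mul_nonneg hk'.le hy01.1), ← hkv]
        exact mul_lt_mul_of_pos_left hy.2 hk'
    have hnz : ∀ y ∈ Ico u v, σ y ≠ 0 := by
      intro y hy h
      have := (hrun y hy).2
      rw [h] at this
      simp at this
      exact hcon this
    have huI : u ∈ Ico u v := ⟨le_rfl, huv⟩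
    obtain ⟨b, hb, hub⟩ := H.cover u (hrun u huI).1
    have hul : l b < u := by
      rcases hub.1.eq_or_lt with h | h
      · exact absurd (by rw [← h]; exact H.zero b hb) (hnz u huI)
      · exact h
    have hvr : v ≤ r b := by
      by_contra hc
      push Not at hc
      exact hnz (r b) ⟨hub.2.le, hc⟩ (H.right_end hb (hc.trans_le hv1))
    have hbr : ∀ y ∈ Ico u v, y ∈ Ico (l b) (r b) :=
      fun y hy => ⟨hub.1.trans hy.1, hy.2.trans_le hvr⟩
    have hfin : ((fun y => ⌊k * σ y⌋₊) '' Ico u v).Finite := by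
      refine (Set.finite_lt_nat k).subset ?_
      rintro _ ⟨y, hy, rfl⟩
      exact floor_lt hk (H.mapsTo (hrun y hy).1)
    obtain ⟨_, ⟨ys, hys, rfl⟩, hmax⟩ :=
      Set.exists_max_image _ (fun x : ℕ => x) hfin ⟨_, u, huI, rfl⟩
    have hmax' : ∀ y ∈ Ico u v, ⌊k * σ y⌋₊ ≤ ⌊k * σ ys⌋₊ := fun y hy => hmax _ ⟨y, hy, rfl⟩
    have hub' : ∀ y ∈ Ico u v, k * σ y < ((⌊k * σ ys⌋₊ + 1 : ℕ) : ℝ) := by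
      intro y hy
      have h1 := Nat.lt_floor_add_one (k * σ y)
      have h2 : (⌊k * σ y⌋₊ : ℝ) ≤ ⌊k * σ ys⌋₊ := by exact_mod_cast hmax' y hy
      push_cast; linarith
    have hlim : ∀ A B C : ℝ, 0 < A → (∀ y ∈ Ico u v, A * (y - B) < C) → A * (v - B) ≤ C := by
      intro A B C hA hy
      have : v ≤ B + C / A := by
        refine le_of_forall_lt ?_
        intro c hc
        have := hy (max c u) ⟨le_max_right _ _, max_lt hc huv⟩
        have h2 : max c u - B < C / A := by rw [lt_div_iff₀ hA]; linarith
        linarith [le_max_left c u]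
      have h3 : v - B ≤ C / A := by linarith
      rw [le_div_iff₀ hA] at h3
      linarith
    have hσu0 : 0 ≤ σ u := H.val_nonneg hb hub
    have hσu : 0 < σ u := lt_of_le_of_ne hσu0 (hnz u huI).symm
    have hfl : (⌊k * σ u⌋₊ : ℝ) ≤ k * σ u := Nat.floor_le (by positivity)
    refine ⟨(⌊k * σ u⌋₊, ⌊k * σ ys⌋₊ + 1), ⟨?_, ?_, ?_⟩, ?_⟩
    · exact Nat.lt_succ_of_le (hmax' u huI)
    · exact floor_lt hk (H.mapsTo (hrun ys hys).1)
    · intro i hi1 hi2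
      simp only at hi1 hi2
      rcases hi1.eq_or_lt with h | h
      · rw [← h]; exact (hrun u huI).2
      · have h1 : k * σ u < i := Nat.lt_of_floor_lt h
        have h2 : (i:ℝ) ≤ k * σ ys :=
          (Nat.le_floor_iff (mul_nonneg hk'.le (H.val_nonneg hb (hbr ys hys)))).1
            (Nat.lt_succ_iff.1 hi2)
        obtain ⟨z, hz, hzs⟩ := H.ivt (c := (i:ℝ)/k) hb hub (hbr ys hys) hys.1
          (by rw [le_div_iff₀ hk']; linarith) (by rw [div_le_iff₀ hk']; linarith)
        have := (hrun z ⟨hz.1, hz.2.trans_lt hys.2⟩).2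
        rw [hzs] at this
        have e : (k:ℝ) * ((i:ℝ)/k) = i := by field_simp
        rwa [e, Nat.floor_natCast] at this
    · simp only
      set L' : ℝ := ((⌊k * σ ys⌋₊ + 1 : ℕ) : ℝ) with hL'
      set j' : ℝ := (⌊k * σ u⌋₊ : ℝ) with hj'
      rcases H.dich b hb with hl | ⟨c, hc, hlin⟩
      · have hlt : (L:ℝ) * j' < L' * j := by
          set g := σ u / (u - l b) with hg
          have hul' : 0 < u - l b := by linarith
          have hgp : 0 < g := div_pos hσu hul'
          have hgu : σ u = g * (u - l b) := by rw [hg]; field_simp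
          have h1 : (k * g) * (v - l b) ≤ L' := by
            refine hlim _ _ _ (by positivity) ?_
            intro y hy
            have hyb := hbr y hy
            have hly : l b < y := hul.trans_le hy.1
            have h2 := (H.conv b hb).secant_mono (H.left_mem hb) hub hyb hul.ne' hly.ne' hy.1
            rw [H.zero b hb, sub_zero, sub_zero, ← hg, le_div_iff₀ (by linarith)] at h2
            have h3 := hub' y hy
            have h4 := mul_le_mul_of_nonneg_left h2 hk'.le
            linarith
          have h5 : L' * j ≥ (k * g) * (v - l b) * j := mul_le_mul_of_nonneg_right h1 hj1'.le
          have h6 : (L:ℝ) * j' ≤ L * (k * σ u) := mul_le_mul_of_nonneg_left hfl (by linarith)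
          rw [hgu] at h6
          have h7 : (k * g) * (v - l b) * j - L * (k * (g * (u - l b))) = g * k * k * (l b * (v - u)) := by
            rw [← hku, ← hkv]; ring
          have h8 : 0 < g * k * k * (l b * (v - u)) := by
            have : 0 < v - u := by linarith
            positivity
          linarith
        exact ⟨hlt.le, Or.inl hlt⟩
      · have h1 : (k * c) * (v - 0) ≤ L' := by
          refine hlim _ _ _ (by positivity) ?_
          intro y hy
          have h3 := hub' y hy
          rw [hlin y (hbr y hy)] at h3
          linarith
        have h2 : j' ≤ c * j := by
          rw [hlin u hub] at hfl
          rw [← hku]; linarith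
        have h3 : c * L ≤ L' := by rw [← hkv]; linarith
        refine ⟨?_, Or.inr ?_⟩
        · calc (L:ℝ) * j' ≤ L * (c * j) := mul_le_mul_of_nonneg_left h2 (by linarith)
            _ = c * L * j := by ring
            _ ≤ L' * j := mul_le_mul_of_nonneg_right h3 hj1'.le
        · have : 0 < (L:ℝ) := by linarith
          nlinarith
  have hPfin : {q | P q}.Finite := by
    refine ((Set.finite_Iio (k+1)).prod (Set.finite_Iio (k+1))).subset ?_
    rintro ⟨j, L⟩ ⟨h1, h2, _⟩
    simp only at h1 h2
    exact ⟨by simp; omega, by simp; omega⟩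
  have hPne : {q | P q}.Nonempty := by
    refine ⟨(i₀, i₀ + 1), Nat.lt_succ_self _, hi₀, ?_⟩
    intro i h1 h2
    simp only at h1 h2
    obtain rfl : i = i₀ := by omega
    exact hpos
  obtain ⟨q, hq, hqm⟩ := Set.exists_max_image _
    (fun q : ℕ × ℕ => toLex ((q.2:ℝ) / q.1, (q.2:ℝ))) hPfin hPne
  obtain ⟨q', hq', h1, h2⟩ := step q hq
  have h3 := hqm q' hq'
  have hp : (0:ℝ) < q.1 := by exact_mod_cast hne0 _ (hq.2.2 q.1 le_rfl hq.1)
  have hp' : (0:ℝ) < q'.1 := by exact_mod_cast hne0 _ (hq'.2.2 q'.1 le_rfl hq'.1)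
  rw [Prod.Lex.toLex_le_toLex] at h3
  simp only at h3
  rw [div_lt_div_iff₀ hp' hp, div_eq_div_iff hp'.ne' hp.ne'] at h3
  rcases h3 with h3 | ⟨h3, h4⟩
  · linarith
  · rcases h2 with h2 | h2 <;> linarith

end BrSys

namespace BrSys
variable {σ : ℝ → ℝ} {n : ℕ} {l r s : ℕ → ℝ}

lemma Tm_lin (σ : ℝ → ℝ) (k : ℕ) (α β : ℝ) (w u : ℕ → ℝ) (j : ℕ) :
    Tm σ k (fun i => α * w i + β * u i) j = α * Tm σ k w j + β * Tm σ k u j := by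
  unfold Tm
  split_ifs
  · rw [Finset.mul_sum, Finset.mul_sum, ← Finset.sum_add_distrib]
    exact Finset.sum_congr rfl fun i _ => by ring
  · simp

lemma uniq (H : BrSys σ n l r s) {k : ℕ} (hk : 1 ≤ k) (w u : ℕ → ℝ)
    (hw : Tm σ k w = w) (hu : Tm σ k u = u)
    (hs : ∑ i ∈ Finset.range k, w i = ∑ i ∈ Finset.range k, u i) : w = u := by
  set z : ℕ → ℝ := fun i => w i - u i with hz
  have hzT : Tm σ k z = z := by
    have : z = fun i => 1 * w i + (-1) * u i := by ext i; simp only [hz]; ring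
    ext j
    rw [this, Tm_lin, hw, hu]
  have hzs : ∑ i ∈ Finset.range k, z i = 0 := by
    simp only [hz]; rw [Finset.sum_sub_distrib, hs, sub_self]
  have hz0 : ∀ j, k ≤ j → z j = 0 := by
    intro j hj
    rw [← hzT, Tm, if_neg (by omega)]
  set y : ℕ → ℝ := fun i => |z i| with hy
  have hle : ∀ j ∈ Finset.range k, y j ≤ Tm σ k y j := by
    intro j hj
    have hj' := Finset.mem_range.1 hj
    have : z j = ∑ i ∈ Finset.range k, z i * pm σ k i j := by
      conv_lhs => rw [← hzT]
      rw [Tm, if_pos hj']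
    simp only [hy, Tm, if_pos hj']
    rw [this]
    refine (Finset.abs_sum_le_sum_abs _ _).trans (Finset.sum_le_sum fun i _ => ?_)
    rw [abs_mul, abs_of_nonneg (pm_nonneg _ _ _ _)]
  have hyT : Tm σ k y = y := by
    have h1 := (Finset.sum_eq_sum_iff_of_le hle).1 (H.Tm_sum hk y).symm
    ext j
    by_cases hj : j < k
    · exact (h1 j (Finset.mem_range.2 hj)).symm
    · rw [Tm, if_neg hj]; simp only [hy]; rw [hz0 j (by omega), abs_zero]
  by_contra hne
  have hex : ∃ i ∈ Finset.range k, z i ≠ 0 := by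
    by_contra hcon
    push Not at hcon
    apply hne
    ext j
    by_cases hj : j < k
    · exact sub_eq_zero.1 (hcon j (Finset.mem_range.2 hj))
    · exact sub_eq_zero.1 (hz0 j (by omega))
  obtain ⟨i1, hi1, hp1⟩ := Finset.exists_pos_of_sum_zero_of_exists_nonzero z hzs hex
  obtain ⟨i2, hi2, hp2⟩ := Finset.exists_pos_of_sum_zero_of_exists_nonzero (fun i => - z i)
    (by rw [Finset.sum_neg_distrib, hzs, neg_zero])
    (by obtain ⟨i, h1, h2⟩ := hex; exact ⟨i, h1, neg_ne_zero.2 h2⟩)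
  have a1 := H.key hk (fun i => 1 * y i + 1 * z i)
    (fun i => by simp only [hy]; linarith [neg_abs_le (z i)])
    (by ext j; rw [Tm_lin, hyT, hzT]) (Finset.mem_range.1 hi1)
    (by simp only [hy]; linarith [abs_nonneg (z i1)])
  have a2 := H.key hk (fun i => 1 * y i + (-1) * z i)
    (fun i => by simp only [hy]; linarith [le_abs_self (z i)])
    (by ext j; rw [Tm_lin, hyT, hzT]) (Finset.mem_range.1 hi2)
    (by simp only [hy]; linarith [abs_nonneg (z i2)])
  simp only [hy] at a1 a2
  rcases abs_cases (z 0) with h | h <;> linarith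

/-- non-increasing densities in coordinates -/
def SS (k : ℕ) : Set (ℕ → ℝ) :=
  {w | Antitone w ∧ (∀ i, 0 ≤ w i) ∧ (∀ i, k ≤ i → w i = 0) ∧ ∑ i ∈ Finset.range k, w i = k}

lemma SS_le {k : ℕ} {w : ℕ → ℝ} (hw : w ∈ SS k) (i : ℕ) : w i ≤ k := by
  by_cases hi : i < k
  · rw [← hw.2.2.2]
    exact Finset.single_le_sum (fun i _ => hw.2.1 i) (Finset.mem_range.2 hi)
  · rw [hw.2.2.1 i (by omega)]; positivity

lemma SS_compact (k : ℕ) : IsCompact (SS k) := by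
  refine IsCompact.of_isClosed_subset
    (isCompact_univ_pi (s := fun _ : ℕ => Icc (0:ℝ) k) fun _ => isCompact_Icc) ?_ ?_
  · refine IsClosed.inter ?_ (IsClosed.inter ?_ (IsClosed.inter ?_ ?_))
    · exact isClosed_antitone
    · have : {w : ℕ → ℝ | ∀ i, 0 ≤ w i} = ⋂ i, {w | 0 ≤ w i} := by ext; simp
      change IsClosed {w : ℕ → ℝ | ∀ i, 0 ≤ w i}
      rw [this]
      exact isClosed_iInter fun i => isClosed_le continuous_const (continuous_apply i)
    · change IsClosed {w : ℕ → ℝ | ∀ i, k ≤ i → w i = 0}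
      have : {w : ℕ → ℝ | ∀ i, k ≤ i → w i = 0} = ⋂ i, ⋂ (_ : k ≤ i), {w | w i = 0} := by
        ext; simp
      rw [this]
      exact isClosed_iInter fun i => isClosed_iInter fun _ =>
        isClosed_eq (continuous_apply i) continuous_const
    · exact isClosed_eq (continuous_finsetSum _ fun i _ => continuous_apply i) continuous_const
  · intro w hw i _
    exact ⟨hw.2.1 i, SS_le hw i⟩

lemma stepf (k : ℕ) (hk : 1 ≤ k) {w : ℕ → ℝ} (ha : Antitone w) :
    AntitoneOn (fun x : ℝ => w ⌊k * x⌋₊) (Icc 0 1) ∧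
    Integrable (fun x : ℝ => w ⌊k * x⌋₊) lam := by
  have h1 : AntitoneOn (fun x : ℝ => w ⌊k * x⌋₊) (Icc 0 1) := by
    intro x _ y _ hxy
    exact ha (Nat.floor_mono (mul_le_mul_of_nonneg_left hxy (by positivity)))
  exact ⟨h1, h1.integrableOn_isCompact isCompact_Icc⟩

lemma SS_maps (H : BrSys σ n l r s) {k : ℕ} (hk : 1 ≤ k) {w : ℕ → ℝ} (hw : w ∈ SS k) :
    Tm σ k w ∈ SS k := by
  have hn0 : ∀ i, 0 ≤ Tm σ k w i := by
    intro i
    unfold Tm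
    split_ifs
    · exact Finset.sum_nonneg fun i _ => mul_nonneg (hw.2.1 i) (pm_nonneg _ _ _ _)
    · exact le_rfl
  obtain ⟨hfa, hfi⟩ := stepf k hk hw.1
  have hval : ∀ i < k, ∀ x ∈ Jint k i, w ⌊k * x⌋₊ = w i := by
    intro i hi x hx
    rw [(mem_Jint_iff hk (Jint_sub hk hi hx).1 i).1 hx]
  refine ⟨?_, hn0, ?_, ?_⟩
  · refine antitone_nat_of_succ_le fun j => ?_
    by_cases hj : j + 1 < k
    · rw [H.Tm_eq hk hfi w hval hj, H.Tm_eq hk hfi w hval (show j < k by omega),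
        H.preim_int k _ hfi, H.preim_int k _ hfi]
      refine mul_le_mul_of_nonneg_left (Finset.sum_le_sum fun b hb => ?_) (by positivity)
      exact H.E_mono (by simp at hb; omega) hk j hfi (fun x _ => hw.2.1 _) hfa
    · conv_lhs => rw [Tm, if_neg hj]
      exact hn0 j
  · intro i hi; rw [Tm, if_neg (by omega)]
  · rw [H.Tm_sum hk, hw.2.2.2]

lemma Tm_cont (σ : ℝ → ℝ) (k j : ℕ) : Continuous fun w : ℕ → ℝ => Tm σ k w j := by
  unfold Tm
  split_ifs
  · exact continuous_finsetSum _ fun i _ => (continuous_apply i).mul continuous_const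
  · exact continuous_const

lemma Tm_sum_arg (σ : ℝ → ℝ) (k : ℕ) (c : ℝ) (x : ℕ → ℕ → ℝ) (m j : ℕ) :
    Tm σ k (fun i => c * ∑ t ∈ Finset.range m, x t i) j
      = c * ∑ t ∈ Finset.range m, Tm σ k (x t) j := by
  unfold Tm
  split_ifs
  · rw [Finset.sum_comm, Finset.mul_sum]
    refine Finset.sum_congr rfl fun i _ => ?_
    rw [← Finset.sum_mul]; ring
  · simp

lemma exists_fixed (H : BrSys σ n l r s) {k : ℕ} (hk : 1 ≤ k) :
    ∃ u ∈ SS k, Tm σ k u = u := by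
  set x : ℕ → ℕ → ℝ := fun m => (Tm σ k)^[m] (fun i => if i < k then 1 else 0) with hx
  have hxS : ∀ m, x m ∈ SS k := by
    intro m
    induction m with
    | zero =>
      refine ⟨?_, ?_, ?_, ?_⟩
      · intro i j hij
        simp only [hx, Function.iterate_zero, id]
        split_ifs
        · exact le_rfl
        · omega
        · exact zero_le_one
        · exact le_rfl
      · intro i
        simp only [hx, Function.iterate_zero, id]
        split_ifs <;> norm_num
      · intro i hi
        simp only [hx, Function.iterate_zero, id]
        rw [if_neg (by omega)]
      · simp only [hx, Function.iterate_zero, id]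
        rw [Finset.sum_congr rfl (g := fun _ => (1:ℝ))
          (fun i hi => if_pos (Finset.mem_range.1 hi))]
        simp
    | succ m ih =>
      have : x (m+1) = Tm σ k (x m) := by simp only [hx]; rw [Function.iterate_succ_apply']
      rw [this]; exact H.SS_maps hk ih
  have hxs : ∀ m, Tm σ k (x m) = x (m+1) := by
    intro m; simp only [hx]; rw [Function.iterate_succ_apply']
  set u : ℕ → ℕ → ℝ := fun m i => (1 / ((m:ℝ)+1)) * ∑ t ∈ Finset.range (m+1), x t i with hu
  have huS : ∀ m, u m ∈ SS k := by
    intro m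
    have hm : (0:ℝ) < (m:ℝ) + 1 := by positivity
    refine ⟨?_, ?_, ?_, ?_⟩
    · intro i j hij
      exact mul_le_mul_of_nonneg_left (Finset.sum_le_sum fun t _ => (hxS t).1 hij) (by positivity)
    · intro i
      exact mul_nonneg (by positivity) (Finset.sum_nonneg fun t _ => (hxS t).2.1 i)
    · intro i hi
      simp only [hu]
      rw [Finset.sum_eq_zero fun t _ => (hxS t).2.2.1 i hi, mul_zero]
    · simp only [hu]
      rw [← Finset.mul_sum, Finset.sum_comm, Finset.sum_congr rfl fun t _ => (hxS t).2.2.2]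
      simp
      field_simp
  have hdiff : ∀ m j, |Tm σ k (u m) j - u m j| ≤ (k:ℝ) * (1 / ((m:ℝ)+1)) := by
    intro m j
    have : Tm σ k (u m) j - u m j = (1 / ((m:ℝ)+1)) * (x (m+1) j - x 0 j) := by
      simp only [hu]
      rw [Tm_sum_arg, ← mul_sub, ← Finset.sum_sub_distrib, ← Finset.sum_range_sub (fun t => x t j)]
      congr 1
      exact Finset.sum_congr rfl fun t _ => by rw [hxs]
    rw [this, abs_mul, abs_of_nonneg (by positivity : (0:ℝ) ≤ 1 / ((m:ℝ)+1)), mul_comm]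
    refine mul_le_mul_of_nonneg_right ?_ (by positivity)
    rw [abs_le]
    constructor
    · linarith [(hxS (m+1)).2.1 j, SS_le (hxS 0) j]
    · linarith [(hxS 0).2.1 j, SS_le (hxS (m+1)) j]
  obtain ⟨v, hv, φ, hφ, hlim⟩ := (SS_compact k).tendsto_subseq huS
  refine ⟨v, hv, ?_⟩
  ext j
  have t1 : Tendsto (fun m => Tm σ k (u (φ m)) j - u (φ m) j) atTop (nhds (Tm σ k v j - v j)) :=
    (((Tm_cont σ k j).tendsto v).comp hlim).sub (((continuous_apply j).tendsto v).comp hlim)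
  have t2 : Tendsto (fun m => Tm σ k (u (φ m)) j - u (φ m) j) atTop (nhds 0) := by
    refine squeeze_zero_norm (a := fun m => (k:ℝ) * (1 / ((φ m : ℝ)+1))) (fun m => hdiff _ _) ?_
    have := (tendsto_one_div_add_atTop_nhds_zero_nat (𝕜 := ℝ)).comp hφ.tendsto_atTop
    simpa using this.const_mul (k:ℝ)
  exact sub_eq_zero.1 (tendsto_nhds_unique t1 t2)

end BrSys

lemma Qk_apply {k : ℕ} (hk : 1 ≤ k) (g : ℝ → ℝ) {x : ℝ} {j : ℕ} (hj : j < k) (hx : x ∈ Jint k j) :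
    Qk k g x = k * ∫ y in Jint k j, g y ∂lam := by
  unfold Qk
  rw [Finset.sum_eq_single j, indicator_of_mem hx]
  · intro i _ hne
    exact indicator_of_notMem (fun h => Set.disjoint_left.1 (Jint_disj hk hne) h hx) _
  · intro h; exact absurd (Finset.mem_range.2 hj) h

lemma stmt14_i (τ : ℝ → ℝ) (a d : ℕ → ℝ) (N : ℕ)
    (hτ : PCApprox τ a d N) (n k : ℕ) (hn : N ≤ n) (hk : 1 ≤ k)
    (f g : ℝ → ℝ) (hf : Integrable f lam)
    (h0 : ∀ x ∈ Set.Icc (0:ℝ) 1, 0 ≤ f x) (ha : AntitoneOn f (Set.Icc 0 1))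
    (hg : ∀ A : Set ℝ, MeasurableSet A → A ⊆ Set.Icc (0:ℝ) 1 →
        ∫ x in A, g x ∂lam = ∫ x in (tauN τ a n) ⁻¹' A, f x ∂lam) :
      esssup (Qk k g) ≤ ENNReal.ofReal (a n + D₁ d N) * esssup f
        + ENNReal.ofReal (Dconst a d N * ∫ x, |f x| ∂lam) := by
  have apos : 0 < a n := by
    have h1 : 0 ≤ a (n+1) := hτ.a_anti.antitone.le_of_tendsto hτ.a_lim (n+1)
    exact lt_of_le_of_lt h1 (hτ.a_anti (Nat.lt_succ_self n))
  have hD1 : 0 ≤ D₁ d N := tsum_nonneg fun m => (one_div_pos.2 (hτ.d_pos _)).le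
  by_cases htop : esssup f = ⊤
  · rw [htop, ENNReal.mul_top, top_add]
    · exact le_top
    · simp only [ne_eq, ENNReal.ofReal_eq_zero, not_le]; linarith
  have habs : ∫ x, |f x| ∂lam = ∫ x, f x ∂lam := by
    refine integral_congr_ae ?_
    filter_upwards [lam_ae] with x hx
    exact abs_of_nonneg (h0 x ⟨hx.1, hx.2.le⟩)
  have hM : ∀ᵐ x ∂lam, f x ≤ (esssup f).toReal := by
    have : ∀ᵐ x ∂lam, ENNReal.ofReal (f x) ≤ esssup f := ae_le_essSup
    filter_upwards [this] with x hx
    exact (ENNReal.ofReal_le_iff_le_toReal htop).1 hx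
  have hb := core_bound τ a d N hτ n k hn hk f hf h0 ha _ ENNReal.toReal_nonneg hM
  rw [habs]
  refine essSup_le_of_ae_le _ ?_
  filter_upwards [lam_ae] with x hx
  have hj := floor_lt hk hx
  rw [Qk_apply hk g hj ((mem_Jint_iff hk hx.1 _).2 rfl),
    hg _ (Jint_meas _ _) ((Jint_sub hk hj).trans Ico_subset_Icc_self)]
  refine (ENNReal.ofReal_le_ofReal (hb _)).trans (ENNReal.ofReal_add_le.trans ?_)
  rw [ENNReal.ofReal_mul (by linarith), ENNReal.ofReal_toReal htop]

lemma stmt14_ii (τ : ℝ → ℝ) (a d : ℕ → ℝ) (N : ℕ)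
    (hτ : PCApprox τ a d N) (n k : ℕ) (hn : N ≤ n) (hcontr : a n + D₁ d N < 1)
    (hk : 1 ≤ k) (fnk : ℝ → ℝ) (hfix : IsUlamFixed (tauN τ a n) k fnk) :
      esssup fnk ≤ ENNReal.ofReal (Dconst a d N / (1 - (a n + D₁ d N))) := by
  have hk' : (0:ℝ) < k := by exact_mod_cast hk
  have hN := hτ.N_pos
  have H := brSys_of τ a d N hτ n (by omega)
  obtain ⟨hf, hconst, h0, hInt, g, hgi, hg, hQ⟩ := hfix
  set σ := tauN τ a n with hσ
  have hlm : ∀ i : ℕ, (i:ℝ)/k ∈ Jint k i := fun i => ⟨le_rfl, by gcongr; linarith⟩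
  set w : ℕ → ℝ := fun i => if i < k then fnk ((i:ℝ)/k) else 0 with hw
  have hval : ∀ i < k, ∀ x ∈ Jint k i, fnk x = w i := by
    intro i hi x hx
    simp only [hw, if_pos hi]
    exact hconst i hi x hx _ (hlm i)
  have hwT : Tm σ k w = w := by
    ext j
    by_cases hj : j < k
    · rw [H.Tm_eq hk hf w hval hj, ← hg _ (Jint_meas _ _) ((Jint_sub hk hj).trans Ico_subset_Icc_self)]
      have hpos : lam (Jint k j) ≠ 0 := by
        intro h
        have h2 := lam_real_Jint hk hj
        rw [measureReal_def, h] at h2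
        have : (0:ℝ) < 1 / k := by positivity
        rw [ENNReal.toReal_zero] at h2
        linarith
      obtain ⟨x, hx, hxQ⟩ : ∃ x ∈ Jint k j, Qk k g x = fnk x := by
        by_contra hcon
        push Not at hcon
        refine hpos (measure_mono_null (fun x hx => hcon x hx) (ae_iff.1 hQ))
      rw [← Qk_apply hk g hj hx, hxQ, hval j hj x hx]
    · rw [Tm, if_neg hj]; simp only [hw, if_neg hj]
  have hws : ∑ i ∈ Finset.range k, w i = k := by
    have := step_int hk hf w hval univ (by rw [inter_univ]; exact measurableSet_Ico)
    rw [setIntegral_univ, hInt, mul_one] at this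
    rw [this]
    refine Finset.sum_congr rfl fun i hi => ?_
    rw [inter_univ, lam_real_Jint hk (Finset.mem_range.1 hi)]
    field_simp
  obtain ⟨u, huS, huT⟩ := H.exists_fixed hk
  have hwu : w = u := H.uniq hk w u hwT huT (by rw [hws, huS.2.2.2])
  have hwS : w ∈ BrSys.SS k := by rw [hwu]; exact huS
  obtain ⟨hFa, hFi⟩ := BrSys.stepf k hk hwS.1
  have hval' : ∀ i < k, ∀ x ∈ Jint k i, w ⌊k * x⌋₊ = w i := by
    intro i hi x hx
    rw [(mem_Jint_iff hk (Jint_sub hk hi hx).1 i).1 hx]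
  have hae : ∀ᵐ x : ℝ ∂lam, w ⌊(k:ℝ) * x⌋₊ = fnk x := by
    filter_upwards [lam_ae] with x hx
    exact (hval _ (floor_lt hk hx) x ((mem_Jint_iff hk hx.1 _).2 rfl)).symm
  have hb := core_bound τ a d N hτ n k hn hk (fun x : ℝ => w ⌊(k:ℝ) * x⌋₊) hFi (fun x _ => hwS.2.1 _) hFa
    (w 0) (hwS.2.1 0) (Filter.Eventually.of_forall fun x => hwS.1 (Nat.zero_le _)) 0
  rw [integral_congr_ae hae, hInt, ← hσ, ← H.Tm_eq hk hFi w hval' (by omega : 0 < k), hwT] at hb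
  have hfin : w 0 ≤ Dconst a d N / (1 - (a n + D₁ d N)) := by
    rw [le_div_iff₀ (by linarith)]
    linarith
  refine essSup_le_of_ae_le _ ?_
  filter_upwards [hae] with x hx
  apply ENNReal.ofReal_le_ofReal
  rw [← hx]
  exact (hwS.1 (Nat.zero_le _)).trans hfin


/-- (i) For `n ≥ N` with `a n + D₁ < 1`, `k ≥ 1`, and every non-negative, non-increasing
`f ∈ L¹` with `g` a version of `P_{τ_n} f`:
`ess sup (Q^{(k)}(P_{τ_n} f)) ≤ (a n + D₁) · ess sup f + D · ‖f‖₁`.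
(ii) Consequently every normalized fixed point `f_{n,k}` of `P^{(k)}_{τ_n}` satisfies
`ess sup f_{n,k} ≤ D / (1 − (a n + D₁))`. -/
theorem stmt14 (τ : ℝ → ℝ) (a d : ℕ → ℝ) (N : ℕ)
    (hτ : PCApprox τ a d N) (n k : ℕ) (hn : N ≤ n) (hcontr : a n + D₁ d N < 1)
    (hk : 1 ≤ k) :
    (∀ f g : ℝ → ℝ, MeasureTheory.Integrable f lam → MeasureTheory.Integrable g lam →
      (∀ x ∈ Set.Icc (0:ℝ) 1, 0 ≤ f x) → AntitoneOn f (Set.Icc 0 1) →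
      (∀ A : Set ℝ, MeasurableSet A → A ⊆ Set.Icc (0:ℝ) 1 →
        ∫ x in A, g x ∂lam = ∫ x in (tauN τ a n) ⁻¹' A, f x ∂lam) →
      esssup (Qk k g) ≤ ENNReal.ofReal (a n + D₁ d N) * esssup f
        + ENNReal.ofReal (Dconst a d N * ∫ x, |f x| ∂lam)) ∧
    (∀ fnk : ℝ → ℝ, IsUlamFixed (tauN τ a n) k fnk →
      esssup fnk ≤ ENNReal.ofReal (Dconst a d N / (1 - (a n + D₁ d N)))) := by
  exact ⟨fun f g hf _ h0 ha hg => stmt14_i τ a d N hτ n k hn hk f g hf h0 ha hg,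
    fun fnk h => stmt14_ii τ a d N hτ n k hn hcontr hk fnk h⟩
end
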